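/- arXiv:2508.15319 — 2 statements merged into one kernel-verified Lean document; each statement's English description precedes it below -/
import Mathlib

section
/- Let n ≥ 1 be an integer and let m : ℝ → ℝ be an increasing solution of m'' + m − m^{2n+1} = 0 with m(0) = 0 and m(x) → ±1 as x → ±∞. There exist constants c, C > 0 (depending only on n) such that the following holds: if v : ℝ → ℝ is bounded and continuous, and u : [0,∞) × ℝ → ℝ is continuous, bounded on [0,T] × ℝ for every T > 0, satisfies u(0,·) = v, and on (0,∞) × ℝ is once continuously differentiable in t and twice continuously differentiable in x with ∂_t u(t,x) = ∂_x² u(t,x) + (1 − (2n+1)·m(x)^{2n})·u(t,x), then for all t ≥ 0 and all x ∈ ℝ, |u(t,x) − (∫_ℝ v(y)·m'(y) dy / ∫_ℝ m'(y)² dy)·m'(x)| ≤ C·e^{−ct}·sup_{y∈ℝ}|v(y)|. -/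
open Filter MeasureTheory

open Set Topology

/-! Write `φ = m'`, so that `φ'' + V φ = 0` with `V = f_n'(m)`. The two-point function
`q(t, x, y) = u(t, x) φ(y) - u(t, y) φ(x)` solves `∂ₜ q = ∂ₓ² q + ∂ᵧ² q + (V(x) + V(y)) q` and
vanishes on the diagonal. Since `V` is negative at infinity and `φ` is log-concave, this equation
has on `y ≤ x` an exponentially decaying supersolution `e^{-ct} barrier(x, y)`, and comparison gives
`|q| ≤ C e^{-ct} (φ(x) + φ(y)) sup |v|`. As `∫ u φ` is conserved, `∫ q(t, x, y) φ(y) dy / ∫ φ²`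
is exactly the deviation of `u` from its projection.

For the kink the first integral `m'² = doubleWell(m)` turns both the positivity and the
log-concavity of `m'` into polynomial inequalities in `m²`. -/

section SecondDerivative

/-- `f` is differentiable near `a` and has second derivative `f''` at `a`. Carrying the value `f''`
makes the differential equations below usable without junk values of iterated `deriv`. -/
def HasSecondDerivAt (f : ℝ → ℝ) (f'' a : ℝ) : Prop :=
  (∀ᶠ x in 𝓝 a, DifferentiableAt ℝ f x) ∧ HasDerivAt (deriv f) f'' a

variable {f g f' : ℝ → ℝ} {a b f'' g'' : ℝ}

theorem hasSecondDerivAt_of_hasDerivAt (hf : ∀ᶠ x in 𝓝 a, HasDerivAt f (f' x) x)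
    (hf' : HasDerivAt f' f'' a) : HasSecondDerivAt f f'' a :=
  ⟨hf.mono fun _ hx => hx.differentiableAt,
    hf'.congr_of_eventuallyEq (hf.mono fun _ hx => hx.deriv)⟩

theorem contDiff_one_deriv (hf : ContDiff ℝ 2 f) : ContDiff ℝ 1 (deriv f) :=
  ContDiff.deriv' (by simpa only [one_add_one_eq_two] using hf)

theorem hasSecondDerivAt_of_contDiff (hf : ContDiff ℝ 2 f) (a : ℝ) :
    HasSecondDerivAt f (deriv (deriv f) a) a :=
  ⟨.of_forall (hf.differentiable two_ne_zero),
    ((contDiff_one_deriv hf).differentiable one_ne_zero a).hasDerivAt⟩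

theorem hasSecondDerivAt_const (b a : ℝ) : HasSecondDerivAt (fun _ => b) 0 a :=
  hasSecondDerivAt_of_hasDerivAt (.of_forall fun x => hasDerivAt_const x b) (hasDerivAt_const a 0)

namespace HasSecondDerivAt

theorem hasDerivAt (hf : HasSecondDerivAt f f'' a) : HasDerivAt f (deriv f a) a :=
  hf.1.self_of_nhds.hasDerivAt

theorem hasDerivAt_deriv (hf : HasSecondDerivAt f f'' a) : HasDerivAt (deriv f) f'' a := hf.2

theorem eventually_hasDerivAt (hf : HasSecondDerivAt f f'' a) :
    ∀ᶠ x in 𝓝 a, HasDerivAt f (deriv f x) x :=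
  hf.1.mono fun _ hx => hx.hasDerivAt

theorem add (hf : HasSecondDerivAt f f'' a) (hg : HasSecondDerivAt g g'' a) :
    HasSecondDerivAt (fun x => f x + g x) (f'' + g'') a :=
  hasSecondDerivAt_of_hasDerivAt
    (hf.eventually_hasDerivAt.mp (hg.eventually_hasDerivAt.mono fun _ hg hf => hf.add hg))
    (hf.hasDerivAt_deriv.add hg.hasDerivAt_deriv)

theorem mul (hf : HasSecondDerivAt f f'' a) (hg : HasSecondDerivAt g g'' a) :
    HasSecondDerivAt (fun x => f x * g x) (f'' * g a + 2 * (deriv f a * deriv g a) + f a * g'') a :=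
  hasSecondDerivAt_of_hasDerivAt
    (hf.eventually_hasDerivAt.mp (hg.eventually_hasDerivAt.mono fun _ hg hf => hf.mul hg))
    (((hf.hasDerivAt_deriv.mul hg.hasDerivAt).add (hf.hasDerivAt.mul hg.hasDerivAt_deriv)
      ).congr_deriv (by ring))

theorem const_mul (b : ℝ) (hf : HasSecondDerivAt f f'' a) :
    HasSecondDerivAt (fun x => b * f x) (b * f'') a :=
  hasSecondDerivAt_of_hasDerivAt (hf.eventually_hasDerivAt.mono fun _ hf => hf.const_mul b)
    (hf.hasDerivAt_deriv.const_mul b)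

theorem mul_const (hf : HasSecondDerivAt f f'' a) (b : ℝ) :
    HasSecondDerivAt (fun x => f x * b) (f'' * b) a := by
  simpa only [mul_comm] using hf.const_mul b

theorem sub (hf : HasSecondDerivAt f f'' a) (hg : HasSecondDerivAt g g'' a) :
    HasSecondDerivAt (fun x => f x - g x) (f'' - g'') a := by
  simpa only [neg_one_mul, ← sub_eq_add_neg] using hf.add (hg.const_mul (-1))

theorem exp_mul (hf : HasSecondDerivAt f f'' a) (b : ℝ) :
    HasSecondDerivAt (fun x => Real.exp (b * x) * f x)
      (Real.exp (b * a) * (b ^ 2 * f a + 2 * b * deriv f a + f'')) a := by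
  have hexp (x : ℝ) : HasDerivAt (fun x => Real.exp (b * x)) (b * Real.exp (b * x)) x := by
    simpa [mul_comm] using ((hasDerivAt_id x).const_mul b).exp
  have hexp2 : HasSecondDerivAt (fun x => Real.exp (b * x)) (b * (b * Real.exp (b * a))) a :=
    hasSecondDerivAt_of_hasDerivAt (.of_forall hexp) ((hexp a).const_mul b)
  have hmul := hexp2.mul hf
  rw [(hexp a).deriv] at hmul
  convert hmul using 1
  ring

theorem comp_mul_left (hf : HasSecondDerivAt f f'' (b * a)) :
    HasSecondDerivAt (fun x => f (b * x)) (b ^ 2 * f'') a := by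
  have hmul (x : ℝ) : HasDerivAt (fun x => b * x) b x := by
    simpa using (hasDerivAt_id x).const_mul b
  have hnear := (hmul a).continuousAt.eventually hf.eventually_hasDerivAt
  refine hasSecondDerivAt_of_hasDerivAt (f' := fun x => deriv f (b * x) * b)
    (hnear.mono fun x hx => hx.comp x (hmul x)) ?_
  exact ((hf.hasDerivAt_deriv.comp a (hmul a)).mul_const b).congr_deriv (by ring)

theorem nonneg_of_isLocalMin (hf : HasSecondDerivAt f f'' a) (hmin : IsLocalMin f a) :
    0 ≤ f'' := by
  by_contra! hneg
  have hmax : IsLocalMax f a := isLocalMax_of_deriv_deriv_neg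
    (by rwa [hf.hasDerivAt_deriv.deriv]) hmin.deriv_eq_zero hf.hasDerivAt.continuousAt
  have hconst : f =ᶠ[𝓝 a] fun _ => f a := by
    filter_upwards [hmin, hmax] with x h1 h2 using le_antisymm h2 h1
  have hzero : f'' = 0 := by
    rw [← hf.hasDerivAt_deriv.deriv, hconst.deriv.deriv_eq, deriv_const', deriv_const]
  exact hneg.ne hzero

end HasSecondDerivAt

theorem continuous_of_hasSecondDerivAt {f f'' : ℝ → ℝ} (hf : ∀ x, HasSecondDerivAt f (f'' x) x) :
    Continuous f :=
  continuous_iff_continuousAt.2 fun x => (hf x).hasDerivAt.continuousAt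

theorem continuous_deriv_of_hasSecondDerivAt {f f'' : ℝ → ℝ}
    (hf : ∀ x, HasSecondDerivAt f (f'' x) x) : Continuous (deriv f) :=
  continuous_iff_continuousAt.2 fun x => (hf x).hasDerivAt_deriv.continuousAt

theorem hasCompactSupport_of_hasSecondDerivAt {f f'' : ℝ → ℝ}
    (hf : ∀ x, HasSecondDerivAt f (f'' x) x) (hsupp : HasCompactSupport f) :
    HasCompactSupport f'' := by
  simpa only [show deriv (deriv f) = f'' from funext fun x => (hf x).hasDerivAt_deriv.deriv]
    using hsupp.deriv.deriv

theorem integral_mul_eq_of_hasSecondDerivAt {f f'' ψ ψ'' : ℝ → ℝ}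
    (hf : ∀ x, HasSecondDerivAt f (f'' x) x) (hψ : ∀ x, HasSecondDerivAt ψ (ψ'' x) x)
    (hf'' : Continuous f'') (hψ'' : Continuous ψ'') (hsupp : HasCompactSupport ψ) :
    ∫ x, f'' x * ψ x = ∫ x, f x * ψ'' x := by
  have hf0 := continuous_of_hasSecondDerivAt hf
  have hf1 := continuous_deriv_of_hasSecondDerivAt hf
  have hψ0 := continuous_of_hasSecondDerivAt hψ
  have hψ1 := continuous_deriv_of_hasSecondDerivAt hψ
  have hsupp'' := hasCompactSupport_of_hasSecondDerivAt hψ hsupp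
  have hint : Integrable fun x => f'' x * ψ x :=
    (hf''.mul hψ0).integrable_of_hasCompactSupport hsupp.mul_left
  have hint'' : Integrable fun x => f x * ψ'' x :=
    (hf0.mul hψ'').integrable_of_hasCompactSupport hsupp''.mul_left
  have hderiv (x : ℝ) : HasDerivAt (fun x => deriv f x * ψ x - f x * deriv ψ x)
      (f'' x * ψ x - f x * ψ'' x) x :=
    (((hf x).hasDerivAt_deriv.mul (hψ x).hasDerivAt).sub
      ((hf x).hasDerivAt.mul (hψ x).hasDerivAt_deriv)).congr_deriv (by ring)
  have hwronskian : Integrable fun x => deriv f x * ψ x - f x * deriv ψ x :=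
    ((hf1.mul hψ0).integrable_of_hasCompactSupport hsupp.mul_left).sub
      ((hf0.mul hψ1).integrable_of_hasCompactSupport hsupp.deriv.mul_left)
  rw [← sub_eq_zero, ← integral_sub hint hint'']
  exact integral_eq_zero_of_hasDerivAt_of_integrable hderiv (hint.sub hint'') hwronskian

end SecondDerivative

section ParabolicComparison

theorem deriv_nonpos_of_forall_Icc_ge {f : ℝ → ℝ} {a t f' : ℝ} (hat : a < t)
    (hmin : ∀ s ∈ Icc a t, f t ≤ f s) (hf : HasDerivAt f f' t) : f' ≤ 0 := by
  have hslope := (hasDerivWithinAt_iff_tendsto_slope' (s := Iio t) (by simp)).1 hf.hasDerivWithinAt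
  refine le_of_tendsto hslope ?_
  filter_upwards [Ioo_mem_nhdsLT hat] with s hs
  rw [slope_def_field]
  exact div_nonpos_of_nonneg_of_nonpos (sub_nonneg.2 (hmin s ⟨hs.1.le, hs.2.le⟩))
    (sub_nonpos.2 hs.2.le)

theorem norm_sq_le_sq_add_sq (p : ℝ × ℝ) : ‖p‖ ^ 2 ≤ p.1 ^ 2 + p.2 ^ 2 := by
  rw [Prod.norm_def]
  rcases max_choice ‖p.1‖ ‖p.2‖ with h | h <;> rw [h, Real.norm_eq_abs, sq_abs] <;>
    linarith [sq_nonneg p.1, sq_nonneg p.2]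

/-- Classical supersolutions of `∂ₜ q = ∂ₓ² q + ∂ᵧ² q + W q` on `(0, ∞) × interior D`. -/
def IsSupersolution (D : Set (ℝ × ℝ)) (W : ℝ × ℝ → ℝ) (q : ℝ → ℝ × ℝ → ℝ) : Prop :=
  ∀ t > 0, ∀ p ∈ interior D, ∃ qt qxx qyy : ℝ,
    HasDerivAt (fun s => q s p) qt t ∧
    HasSecondDerivAt (fun x => q t (x, p.2)) qxx p.1 ∧
    HasSecondDerivAt (fun y => q t (p.1, y)) qyy p.2 ∧
    qxx + qyy + W p * q t p ≤ qt

namespace IsSupersolution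

variable {D : Set (ℝ × ℝ)} {W : ℝ × ℝ → ℝ} {q r : ℝ → ℝ × ℝ → ℝ} {T : ℝ}

theorem add (hq : IsSupersolution D W q) (hr : IsSupersolution D W r) :
    IsSupersolution D W fun t p => q t p + r t p := by
  intro t ht p hp
  obtain ⟨qt, qxx, qyy, hqt, hqxx, hqyy, hq⟩ := hq t ht p hp
  obtain ⟨rt, rxx, ryy, hrt, hrxx, hryy, hr⟩ := hr t ht p hp
  exact ⟨_, _, _, hqt.add hrt, hqxx.add hrxx, hqyy.add hryy, by linarith⟩

theorem const_mul (hq : IsSupersolution D W q) {b : ℝ} (hb : 0 ≤ b) :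
    IsSupersolution D W fun t p => b * q t p := by
  intro t ht p hp
  obtain ⟨qt, qxx, qyy, hqt, hqxx, hqyy, hq⟩ := hq t ht p hp
  exact ⟨_, _, _, hqt.const_mul b, hqxx.const_mul b, hqyy.const_mul b,
    by linarith [mul_le_mul_of_nonneg_left hq hb]⟩

theorem exp_mul (hq : IsSupersolution D W q) (c : ℝ) :
    IsSupersolution D (fun p => W p - c) fun t p => Real.exp (-c * t) * q t p := by
  intro t ht p hp
  obtain ⟨qt, qxx, qyy, hqt, hqxx, hqyy, hq⟩ := hq t ht p hp
  have hexp : HasDerivAt (fun s => Real.exp (-c * s)) (-c * Real.exp (-c * t)) t := by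
    simpa [mul_comm] using ((hasDerivAt_id t).const_mul (-c)).exp
  exact ⟨_, _, _, hexp.mul hqt, hqxx.const_mul _, hqyy.const_mul _,
    by linarith [mul_le_mul_of_nonneg_left hq (Real.exp_pos (-c * t)).le]⟩

theorem nonneg_of_neg_potential (hq : IsSupersolution D W q) (hD : IsClosed D)
    (hcont : ContinuousOn (fun z : ℝ × ℝ × ℝ => q z.1 z.2) (Ici 0 ×ˢ D))
    (hW : ∀ p ∈ D, W p < 0) (hinit : ∀ p ∈ D, 0 ≤ q 0 p)
    (hbdry : ∀ t ∈ Icc 0 T, ∀ p ∈ frontier D, 0 ≤ q t p)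
    {R : ℝ} (hfar : ∀ t ∈ Icc 0 T, ∀ p ∈ D, R < ‖p‖ → 0 ≤ q t p) :
    ∀ t ∈ Icc 0 T, ∀ p ∈ D, 0 ≤ q t p := by
  by_contra! hcon
  obtain ⟨t₁, ht₁, p₁, hp₁, hneg₁⟩ := hcon
  have hmem {t p} (ht : t ∈ Icc 0 T) (hp : p ∈ D) (hneg : q t p < 0) :
      (t, p) ∈ Icc 0 T ×ˢ (Metric.closedBall 0 R ∩ D) := by
    refine ⟨ht, ?_, hp⟩
    rw [mem_closedBall_zero_iff]
    exact not_lt.1 fun hR => hneg.not_ge (hfar t ht p hp hR)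
  obtain ⟨⟨t, p⟩, ⟨ht, -, hp⟩, hmin⟩ :=
    (isCompact_Icc.prod ((isCompact_closedBall 0 R).inter_right hD)).exists_isMinOn
      ⟨_, hmem ht₁ hp₁ hneg₁⟩ (hcont.mono fun z hz => ⟨hz.1.1, hz.2.2⟩)
  have hneg : q t p < 0 := (hmin (hmem ht₁ hp₁ hneg₁)).trans_lt hneg₁
  have hglobal : ∀ s ∈ Icc 0 T, ∀ p' ∈ D, q t p ≤ q s p' := fun s hs p' hp' =>
    (lt_or_ge (q s p') 0).elim (fun h => hmin (hmem hs hp' h)) hneg.le.trans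
  have ht0 : 0 < t := ht.1.lt_of_ne fun h => hneg.not_ge (h ▸ hinit p hp)
  have hint : p ∈ interior D := by
    by_contra h
    exact hneg.not_ge (hbdry t ht p ⟨subset_closure hp, h⟩)
  have hnear : ∀ᶠ p' in 𝓝 p, q t p ≤ q t p' := by
    filter_upwards [mem_interior_iff_mem_nhds.1 hint] with p' hp' using hglobal t ht p' hp'
  obtain ⟨qt, qxx, qyy, hqt, hqxx, hqyy, hle⟩ := hq t ht0 p hint
  have hxx : 0 ≤ qxx := hqxx.nonneg_of_isLocalMin
    ((show Continuous fun x => (x, p.2) by fun_prop).continuousAt.eventually hnear)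
  have hyy : 0 ≤ qyy := hqyy.nonneg_of_isLocalMin
    ((show Continuous fun y => (p.1, y) by fun_prop).continuousAt.eventually hnear)
  have htime : qt ≤ 0 := deriv_nonpos_of_forall_Icc_ge ht0
    (fun s hs => hglobal s ⟨hs.1, hs.2.trans ht.2⟩ p hp) hqt
  linarith [mul_pos_of_neg_of_neg (hW p hp) hneg]

theorem one_add_sq_add_sq (hW : ∀ p ∈ D, W p ≤ -4) :
    IsSupersolution D W fun _ p => 1 + p.1 ^ 2 + p.2 ^ 2 := by
  intro t _ p hp
  have hsq (a : ℝ) : HasSecondDerivAt (fun x => x ^ 2) 2 a := by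
    refine hasSecondDerivAt_of_hasDerivAt (f' := fun x => 2 * x) (.of_forall fun x => ?_) ?_
    · simpa using hasDerivAt_pow 2 x
    · simpa using (hasDerivAt_id a).const_mul 2
  refine ⟨_, _, _, hasDerivAt_const t _,
    ((hasSecondDerivAt_const 1 _).add (hsq _)).add (hasSecondDerivAt_const (p.2 ^ 2) _),
    (hasSecondDerivAt_const (1 + p.1 ^ 2) _).add (hsq _), ?_⟩
  nlinarith [hW p (interior_subset hp), sq_nonneg p.1, sq_nonneg p.2]

/-- Without decay at infinity the minimum need not be attained. The perturbation
`e^{-λt} q + ε (1 + x² + y²)` forces it to be, and for large `λ` is again a supersolution. -/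
theorem nonneg (hq : IsSupersolution D W q) (hD : IsClosed D)
    (hcont : ContinuousOn (fun z : ℝ × ℝ × ℝ => q z.1 z.2) (Ici 0 ×ˢ D))
    (hW : ∃ w, ∀ p ∈ D, W p ≤ w) (hbdd : ∃ M, ∀ t ∈ Icc 0 T, ∀ p ∈ D, M ≤ q t p)
    (hinit : ∀ p ∈ D, 0 ≤ q 0 p) (hbdry : ∀ t ∈ Icc 0 T, ∀ p ∈ frontier D, 0 ≤ q t p)
    {t : ℝ} (ht : t ∈ Icc 0 T) {p : ℝ × ℝ} (hp : p ∈ D) : 0 ≤ q t p := by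
  obtain ⟨w, hw⟩ := hW
  obtain ⟨M, hM⟩ := hbdd
  set L := |w| + 4
  have hL (p) (hp : p ∈ D) : W p - L ≤ -4 := by linarith [hw p hp, le_abs_self w]
  have hperturbed (ε : ℝ) (hε : 0 < ε) :
      0 ≤ Real.exp (-L * t) * q t p + ε * (1 + p.1 ^ 2 + p.2 ^ 2) := by
    refine nonneg_of_neg_potential (R := max 1 (|M| / ε))
      ((hq.exp_mul L).add ((one_add_sq_add_sq hL).const_mul hε.le)) hD ?_
      (fun p hp => by linarith [hL p hp]) (fun p hp => ?_) (fun s hs p hp => ?_)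
      (fun s hs p hp hR => ?_) t ht p hp
    · exact (ContinuousOn.mul (by fun_prop) hcont).add (by fun_prop)
    · have := hinit p hp
      positivity
    · have := hbdry s hs p hp
      positivity
    · obtain ⟨hR1, hRM⟩ := max_lt_iff.1 hR
      rw [div_lt_iff₀ hε] at hRM
      have hgrowth : |M| ≤ ε * (1 + p.1 ^ 2 + p.2 ^ 2) := by
        nlinarith [mul_pos hε (zero_lt_one.trans hR1), norm_sq_le_sq_add_sq p]
      have hexp : Real.exp (-L * s) ≤ 1 :=
        Real.exp_le_one_iff.2 (mul_nonpos_of_nonpos_of_nonneg (neg_nonpos.2 (by positivity)) hs.1)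
      have hlower : -|M| ≤ Real.exp (-L * s) * q s p := by
        nlinarith [hM s hs p hp, neg_abs_le M, abs_nonneg M, Real.exp_pos (-L * s)]
      linarith
  have hexp : 0 ≤ Real.exp (-L * t) * q t p := by
    refine le_of_forall_pos_le_add fun δ hδ => ?_
    have hpos : 0 < 1 + p.1 ^ 2 + p.2 ^ 2 := by positivity
    have := hperturbed (δ / (1 + p.1 ^ 2 + p.2 ^ 2)) (by positivity)
    rwa [div_mul_cancel₀ _ hpos.ne'] at this
  exact nonneg_of_mul_nonneg_right hexp (Real.exp_pos _)

end IsSupersolution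

end ParabolicComparison

section RealLine

theorem integrableOn_Iic_deriv_of_nonneg {g g' : ℝ → ℝ} {a l : ℝ}
    (hderiv : ∀ x, HasDerivAt g (g' x) x) (hnonneg : ∀ x ≤ a, 0 ≤ g' x)
    (hlim : Tendsto g atBot (𝓝 l)) : IntegrableOn g' (Iic a) := by
  have hreflect (x : ℝ) : HasDerivAt (fun x => g (-x)) (-g' (-x)) x := by
    simpa [Function.comp_def] using (hderiv (-x)).comp x (hasDerivAt_neg x)
  have hint : IntegrableOn (fun x => -g' (-x)) (Ioi (-a)) :=
    integrableOn_Ioi_deriv_of_nonpos' (fun x _ => hreflect x)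
      (fun x hx => neg_nonpos.2 (hnonneg (-x) (neg_le.1 (mem_Ioi.1 hx).le)))
      (hlim.comp tendsto_neg_atTop_atBot)
  rw [integrableOn_Iic_iff_integrableOn_Iio]
  simpa using hint.neg.comp_neg

theorem exists_forall_le_of_eventually_cocompact {X : Type*} [TopologicalSpace X] {f : X → ℝ}
    (hf : Continuous f) {b : ℝ} (hb : ∀ᶠ x in cocompact X, f x ≤ b) : ∃ w, ∀ x, f x ≤ w := by
  obtain ⟨s, hs, hsb⟩ := mem_cocompact.1 hb
  obtain ⟨w, hw⟩ := (hs.image hf).bddAbove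
  refine ⟨max w b, fun x => ?_⟩
  by_cases hx : x ∈ s
  · exact le_max_of_le_left (hw (mem_image_of_mem f hx))
  · exact le_max_of_le_right (hsb hx)

theorem exists_add_le_mul_exp_sub_one {g : ℝ → ℝ} (hg : Continuous g)
    (hlim : Tendsto g (cocompact ℝ) atBot) :
    ∃ K ≥ 0, ∀ x y, g x + g y ≤ K * Real.exp (y - x) - 1 := by
  obtain ⟨A, hA⟩ := exists_forall_le_of_eventually_cocompact hg (hlim.eventually_le_atBot 0)
  obtain ⟨R, hR⟩ : ∃ R, ∀ x, R < |x| → g x ≤ -1 - A := by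
    have hfar := hlim.eventually_le_atBot (-1 - A)
    rw [← Metric.cobounded_eq_cocompact, hasBasis_cobounded_norm.eventually_iff] at hfar
    obtain ⟨R, -, hR⟩ := hfar
    exact ⟨R, fun x hx => hR hx.le⟩
  set K := (2 * |A| + 1) * Real.exp (2 * R)
  refine ⟨K, by positivity, fun x y => ?_⟩
  have hexp : 0 ≤ K * Real.exp (y - x) := by positivity
  by_cases hx : R < |x|
  · linarith [hR x hx, hA y]
  by_cases hy : R < |y|
  · linarith [hR y hy, hA x]
  have hnear : 1 ≤ Real.exp (2 * R) * Real.exp (y - x) := by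
    rw [← Real.exp_add]
    exact Real.one_le_exp (by linarith [le_abs_self x, neg_abs_le y])
  calc g x + g y ≤ (2 * |A| + 1) * 1 - 1 := by linarith [hA x, hA y, le_abs_self A]
    _ ≤ (2 * |A| + 1) * (Real.exp (2 * R) * Real.exp (y - x)) - 1 := by gcongr
    _ = K * Real.exp (y - x) - 1 := by rw [mul_assoc]

end RealLine

section GroundState

/-- A positive, integrable, log-concave solution `φ` of `φ'' + V φ = 0`, where the potential is
negative at infinity. -/
structure IsLogConcaveGroundState (V φ : ℝ → ℝ) : Prop where
  continuous_potential : Continuous V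
  eventually_potential_le : ∃ κ > 0, ∀ᶠ x in cocompact ℝ, V x ≤ -κ
  pos : ∀ x, 0 < φ x
  hasSecondDerivAt : ∀ x, HasSecondDerivAt φ (-V x * φ x) x
  antitone_logDeriv : Antitone (logDeriv φ)
  integrable : Integrable φ
  tendsto_zero : Tendsto φ (cocompact ℝ) (𝓝 0)

/-- A positive stationary barrier for the two-point function `u x φ y - u y φ x` on the half-plane
`y ≤ x`. There, log-concavity of `φ` gives the cross term produced by the factor `1 - exp (y - x)`
the sign of a supersolution, and the last two summands dominate bounded initial data. -/
noncomputable def barrier (K : ℝ) (φ : ℝ → ℝ) (p : ℝ × ℝ) : ℝ :=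
  K * (1 - Real.exp (p.2 - p.1)) * (φ p.1 * φ p.2) + φ p.1 + φ p.2

namespace IsLogConcaveGroundState

variable {V φ : ℝ → ℝ}

theorem continuous (h : IsLogConcaveGroundState V φ) : Continuous φ :=
  continuous_of_hasSecondDerivAt h.hasSecondDerivAt

theorem continuous_deriv (h : IsLogConcaveGroundState V φ) : Continuous (deriv φ) :=
  continuous_deriv_of_hasSecondDerivAt h.hasSecondDerivAt

theorem exists_potential_le (h : IsLogConcaveGroundState V φ) : ∃ w, ∀ x, V x ≤ w :=
  have ⟨_, _, hV⟩ := h.eventually_potential_le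
  exists_forall_le_of_eventually_cocompact h.continuous_potential hV

theorem exists_isMax (h : IsLogConcaveGroundState V φ) : ∃ a, ∀ x, φ x ≤ φ a :=
  h.continuous.exists_forall_ge' 0 (h.tendsto_zero.eventually_le_const (h.pos 0))

theorem deriv_mul_le_mul_deriv (h : IsLogConcaveGroundState V φ) {x y : ℝ} (hyx : y ≤ x) :
    deriv φ x * φ y ≤ φ x * deriv φ y := by
  have := h.antitone_logDeriv hyx
  rw [logDeriv_apply, logDeriv_apply, div_le_div_iff₀ (h.pos x) (h.pos y)] at this
  linarith

theorem integrable_deriv (h : IsLogConcaveGroundState V φ) : Integrable (deriv φ) := by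
  obtain ⟨a, ha⟩ := h.exists_isMax
  have ha' : deriv φ a = 0 := IsLocalMax.deriv_eq_zero (.of_forall ha)
  have hd (x : ℝ) : HasDerivAt φ (deriv φ x) x := (h.hasSecondDerivAt x).hasDerivAt
  have hleft : IntegrableOn (deriv φ) (Iic a) := by
    refine integrableOn_Iic_deriv_of_nonneg hd (fun x hx => ?_)
      (h.tendsto_zero.mono_left atBot_le_cocompact)
    have := h.deriv_mul_le_mul_deriv hx
    rw [ha', zero_mul] at this
    exact nonneg_of_mul_nonneg_right this (h.pos a)
  have hright : IntegrableOn (deriv φ) (Ioi a) := by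
    refine integrableOn_Ioi_deriv_of_nonpos' (fun x _ => hd x) (fun x hx => ?_)
      (h.tendsto_zero.mono_left atTop_le_cocompact)
    have := h.deriv_mul_le_mul_deriv (mem_Ioi.1 hx).le
    rw [ha', mul_zero] at this
    exact nonpos_of_mul_nonpos_left this (h.pos a)
  rw [← integrableOn_univ, ← Iic_union_Ioi (a := a)]
  exact hleft.union hright

theorem integrable_sq (h : IsLogConcaveGroundState V φ) : Integrable fun x => φ x ^ 2 := by
  obtain ⟨a, ha⟩ := h.exists_isMax
  simp only [sq]
  refine h.integrable.bdd_mul (c := φ a) h.continuous.aestronglyMeasurable (.of_forall fun x => ?_)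
  rw [Real.norm_of_nonneg (h.pos x).le]
  exact ha x

theorem integral_sq_pos (h : IsLogConcaveGroundState V φ) : 0 < ∫ x, φ x ^ 2 :=
  integral_pos_of_integrable_nonneg_nonzero (x := 0) (h.continuous.pow 2) h.integrable_sq
    (fun _ => sq_nonneg _) (pow_pos (h.pos 0) 2).ne'

theorem exists_potential_bound (h : IsLogConcaveGroundState V φ) :
    ∃ K ≥ 0, ∃ κ > 0, ∀ x y, V x * φ y + V y * φ x
      ≤ K * Real.exp (y - x) * (φ x * φ y) - φ x * φ y - κ * (φ x + φ y) := by
  obtain ⟨κ, hκ, hV⟩ := h.eventually_potential_le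
  have hlim : Tendsto (fun x => (V x + κ / 2) / φ x) (cocompact ℝ) atBot := by
    have hinv : Tendsto (fun x => κ / 2 * (φ x)⁻¹) (cocompact ℝ) atTop :=
      (tendsto_inv_nhdsGT_zero.comp (tendsto_nhdsWithin_iff.2
        ⟨h.tendsto_zero, .of_forall h.pos⟩)).const_mul_atTop (half_pos hκ)
    refine tendsto_atBot_mono' _ ?_ (tendsto_neg_atTop_atBot.comp hinv)
    filter_upwards [hV] with x hx
    rw [Function.comp_apply, ← neg_mul, ← div_eq_mul_inv]
    exact div_le_div_of_nonneg_right (by linarith) (h.pos x).le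
  obtain ⟨K, hK, hsum⟩ := exists_add_le_mul_exp_sub_one (g := fun x => (V x + κ / 2) / φ x)
    ((h.continuous_potential.add continuous_const).div h.continuous fun x => (h.pos x).ne') hlim
  refine ⟨K, hK, κ / 2, half_pos hκ, fun x y => ?_⟩
  have hx := h.pos x
  have hy := h.pos y
  have hmul := mul_le_mul_of_nonneg_right (hsum x y) (mul_pos hx hy).le
  have hclear : ((V x + κ / 2) / φ x + (V y + κ / 2) / φ y) * (φ x * φ y)
      = (V x + κ / 2) * φ y + (V y + κ / 2) * φ x := by
    field_simp
  linarith

theorem add_le_barrier (h : IsLogConcaveGroundState V φ) {K : ℝ} (hK : 0 ≤ K) {p : ℝ × ℝ}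
    (hp : p.2 ≤ p.1) : φ p.1 + φ p.2 ≤ barrier K φ p := by
  have hexp : 0 ≤ 1 - Real.exp (p.2 - p.1) :=
    sub_nonneg.2 (Real.exp_le_one_iff.2 (sub_nonpos.2 hp))
  have := mul_nonneg (mul_nonneg hK hexp) (mul_pos (h.pos p.1) (h.pos p.2)).le
  simp only [barrier]
  linarith

theorem barrier_le (h : IsLogConcaveGroundState V φ) {K : ℝ} (hK : 0 ≤ K) (p : ℝ × ℝ) :
    barrier K φ p ≤ K * (φ p.1 * φ p.2) + φ p.1 + φ p.2 := by
  have := mul_nonneg (mul_nonneg hK (Real.exp_pos (p.2 - p.1)).le)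
    (mul_pos (h.pos p.1) (h.pos p.2)).le
  simp only [barrier]
  linarith

theorem hasSecondDerivAt_barrier_fst (h : IsLogConcaveGroundState V φ) (K x y : ℝ) :
    HasSecondDerivAt (fun x => barrier K φ (x, y))
      (-V x * φ x * (K * φ y + 1)
        - K * Real.exp (y - x) * φ y * (φ x - 2 * deriv φ x - V x * φ x)) x := by
  have hφ := h.hasSecondDerivAt x
  convert ((hφ.mul_const (K * φ y + 1)).sub
    ((hφ.exp_mul (-1)).const_mul (K * Real.exp y * φ y))).add (hasSecondDerivAt_const (φ y) x)
    using 1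
  · funext z
    simp only [barrier, sub_eq_add_neg y, Real.exp_add]
    ring_nf
  · rw [sub_eq_add_neg y, Real.exp_add]
    ring_nf

theorem hasSecondDerivAt_barrier_snd (h : IsLogConcaveGroundState V φ) (K x y : ℝ) :
    HasSecondDerivAt (fun y => barrier K φ (x, y))
      (-V y * φ y * (K * φ x + 1)
        - K * Real.exp (y - x) * φ x * (φ y + 2 * deriv φ y - V y * φ y)) y := by
  have hφ := h.hasSecondDerivAt y
  convert ((hφ.mul_const (K * φ x + 1)).sub
    ((hφ.exp_mul 1).const_mul (K * Real.exp (-x) * φ x))).add (hasSecondDerivAt_const (φ x) y)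
    using 1
  · funext z
    simp only [barrier, sub_eq_add_neg z, Real.exp_add]
    ring_nf
  · rw [sub_eq_add_neg y, Real.exp_add]
    ring_nf

theorem min_mul_barrier_le (h : IsLogConcaveGroundState V φ) {K κ : ℝ} (hK : 0 ≤ K) (hκ : 0 ≤ κ)
    (p : ℝ × ℝ) :
    min κ (1 / (K + 1)) * barrier K φ p ≤ φ p.1 * φ p.2 + κ * (φ p.1 + φ p.2) := by
  have hx := h.pos p.1
  have hy := h.pos p.2
  have hmin : 0 ≤ min κ (1 / (K + 1)) := by positivity
  have hK1 : min κ (1 / (K + 1)) * K ≤ 1 := calc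
    min κ (1 / (K + 1)) * K ≤ 1 / (K + 1) * (K + 1) := by
      gcongr; exacts [min_le_right _ _, by linarith]
    _ = 1 := one_div_mul_cancel (by positivity)
  calc min κ (1 / (K + 1)) * barrier K φ p
      ≤ min κ (1 / (K + 1)) * (K * (φ p.1 * φ p.2) + φ p.1 + φ p.2) :=
        mul_le_mul_of_nonneg_left (h.barrier_le hK p) hmin
    _ = min κ (1 / (K + 1)) * K * (φ p.1 * φ p.2) + min κ (1 / (K + 1)) * (φ p.1 + φ p.2) := by
        ring
    _ ≤ 1 * (φ p.1 * φ p.2) + κ * (φ p.1 + φ p.2) := by gcongr; exact min_le_left _ _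
    _ = _ := by rw [one_mul]

theorem exists_isSupersolution_barrier (h : IsLogConcaveGroundState V φ) :
    ∃ K ≥ 0, ∃ c > 0, IsSupersolution {p | p.2 ≤ p.1} (fun p => V p.1 + V p.2 + c)
      fun _ => barrier K φ := by
  obtain ⟨L, hL, κ, hκ, hbound⟩ := h.exists_potential_bound
  have hK : 0 ≤ L / 2 := by positivity
  refine ⟨L / 2, hK, min κ (1 / (L / 2 + 1)), by positivity, fun t _ p hp => ?_⟩
  refine ⟨_, _, _, hasDerivAt_const t _, h.hasSecondDerivAt_barrier_fst _ p.1 p.2,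
    h.hasSecondDerivAt_barrier_snd _ p.1 p.2, ?_⟩
  have hdecay := h.min_mul_barrier_le hK hκ.le p
  have hle : p.2 ≤ p.1 := interior_subset (s := {p : ℝ × ℝ | p.2 ≤ p.1}) hp
  have hcross : 0 ≤ L * Real.exp (p.2 - p.1) * (φ p.1 * deriv φ p.2 - deriv φ p.1 * φ p.2) :=
    mul_nonneg (by positivity) (sub_nonneg.2 (h.deriv_mul_le_mul_deriv hle))
  have hbound := hbound p.1 p.2
  simp only [barrier] at hdecay ⊢
  linarith

end IsLogConcaveGroundState

end GroundState

section ClassicalSolution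

/-- Classical solutions of `∂ₜ u = ∂ₓ² u + V u` on `(0, ∞) × ℝ`, continuous up to `t = 0` and
bounded on time strips; `ut` is the time derivative. The equation is part of `hasSecondDerivAt`,
which prescribes `∂ₓ² u` as `ut - V u`. -/
structure IsClassicalSolution (V : ℝ → ℝ) (u ut : ℝ → ℝ → ℝ) : Prop where
  continuousOn : ContinuousOn (fun p : ℝ × ℝ => u p.1 p.2) {p | 0 ≤ p.1}
  bounded : ∀ T > 0, ∃ M, ∀ t ∈ Icc 0 T, ∀ x, |u t x| ≤ M
  continuousOn_ut : ContinuousOn (fun p : ℝ × ℝ => ut p.1 p.2) {p | 0 < p.1}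
  hasDerivAt : ∀ t > 0, ∀ x, HasDerivAt (fun s => u s x) (ut t x) t
  hasSecondDerivAt : ∀ t > 0, ∀ x, HasSecondDerivAt (u t) (ut t x - V x * u t x) x

/-- The antisymmetric two-point function measuring how far `u t` is from a multiple of `φ`. -/
def twoPoint (u : ℝ → ℝ → ℝ) (φ : ℝ → ℝ) (t : ℝ) (p : ℝ × ℝ) : ℝ :=
  u t p.1 * φ p.2 - u t p.2 * φ p.1

theorem abs_twoPoint_le {u : ℝ → ℝ → ℝ} {φ : ℝ → ℝ} (hφ : ∀ x, 0 ≤ φ x) {M t : ℝ}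
    (hM : ∀ x, |u t x| ≤ M) (p : ℝ × ℝ) : |twoPoint u φ t p| ≤ M * (φ p.1 + φ p.2) := by
  refine (abs_sub _ _).trans ?_
  rw [abs_mul, abs_mul, abs_of_nonneg (hφ _), abs_of_nonneg (hφ _)]
  linarith [mul_le_mul_of_nonneg_right (hM p.1) (hφ p.2),
    mul_le_mul_of_nonneg_right (hM p.2) (hφ p.1)]

namespace IsClassicalSolution

variable {V φ : ℝ → ℝ} {u ut : ℝ → ℝ → ℝ}

theorem of_hasDerivAt {ux uxx : ℝ → ℝ → ℝ}
    (hu : ContinuousOn (fun p : ℝ × ℝ => u p.1 p.2) {p | 0 ≤ p.1})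
    (hbdd : ∀ T > 0, ∃ M, ∀ t ∈ Icc 0 T, ∀ x, |u t x| ≤ M)
    (hut : ContinuousOn (fun p : ℝ × ℝ => ut p.1 p.2) {p | 0 < p.1})
    (heq : ∀ t, 0 < t → ∀ x, HasDerivAt (fun s => u s x) (ut t x) t ∧
      HasDerivAt (u t) (ux t x) x ∧ HasDerivAt (ux t) (uxx t x) x ∧
      ut t x = uxx t x + V x * u t x) :
    IsClassicalSolution V u ut where
  continuousOn := hu
  bounded := hbdd
  continuousOn_ut := hut
  hasDerivAt t ht x := (heq t ht x).1
  hasSecondDerivAt t ht x := by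
    rw [(heq t ht x).2.2.2, add_sub_cancel_right]
    exact hasSecondDerivAt_of_hasDerivAt (.of_forall fun y => (heq t ht y).2.1) (heq t ht x).2.2.1

theorem neg (hu : IsClassicalSolution V u ut) :
    IsClassicalSolution V (fun t x => -u t x) (fun t x => -ut t x) where
  continuousOn := hu.continuousOn.neg
  bounded T hT := by simpa only [abs_neg] using hu.bounded T hT
  continuousOn_ut := hu.continuousOn_ut.neg
  hasDerivAt t ht x := (hu.hasDerivAt t ht x).neg
  hasSecondDerivAt t ht x := by
    have := (hu.hasSecondDerivAt t ht x).const_mul (-1)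
    convert this using 1
    · funext y; ring
    · ring

theorem continuous_slice (hu : IsClassicalSolution V u ut) {t : ℝ} (ht : 0 ≤ t) :
    Continuous (u t) :=
  hu.continuousOn.comp_continuous (f := fun x => (t, x)) (by fun_prop) fun _ => ht

theorem continuous_ut_slice (hu : IsClassicalSolution V u ut) {t : ℝ} (ht : 0 < t) :
    Continuous (ut t) :=
  hu.continuousOn_ut.comp_continuous (f := fun x => (t, x)) (by fun_prop) fun _ => ht

theorem bounded_slice (hu : IsClassicalSolution V u ut) {t : ℝ} (ht : 0 ≤ t) :
    ∃ M, ∀ x, |u t x| ≤ M :=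
  have ⟨M, hM⟩ := hu.bounded (t + 1) (by positivity)
  ⟨M, hM t ⟨ht, by linarith⟩⟩

theorem continuousOn_twoPoint (hu : IsClassicalSolution V u ut) (hφ : Continuous φ) :
    ContinuousOn (fun z : ℝ × ℝ × ℝ => twoPoint u φ z.1 z.2) {z | 0 ≤ z.1} := by
  have hfst : ContinuousOn (fun z : ℝ × ℝ × ℝ => u z.1 z.2.1) {z | 0 ≤ z.1} :=
    hu.continuousOn.comp (f := fun z : ℝ × ℝ × ℝ => (z.1, z.2.1)) (by fun_prop) fun _ hz => hz
  have hsnd : ContinuousOn (fun z : ℝ × ℝ × ℝ => u z.1 z.2.2) {z | 0 ≤ z.1} :=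
    hu.continuousOn.comp (f := fun z : ℝ × ℝ × ℝ => (z.1, z.2.2)) (by fun_prop) fun _ hz => hz
  exact (hfst.mul (by fun_prop)).sub (hsnd.mul (by fun_prop))

theorem isSupersolution_twoPoint (hu : IsClassicalSolution V u ut)
    (hφ : ∀ x, HasSecondDerivAt φ (-V x * φ x) x) (D : Set (ℝ × ℝ)) :
    IsSupersolution D (fun p => V p.1 + V p.2) (twoPoint u φ) := by
  intro t ht p _
  refine ⟨_, _, _,
    ((hu.hasDerivAt t ht p.1).mul_const (φ p.2)).sub ((hu.hasDerivAt t ht p.2).mul_const (φ p.1)),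
    ((hu.hasSecondDerivAt t ht p.1).mul_const (φ p.2)).sub ((hφ p.1).const_mul (u t p.2)),
    ((hφ p.2).const_mul (u t p.1)).sub ((hu.hasSecondDerivAt t ht p.2).mul_const (φ p.1)), ?_⟩
  simp only [twoPoint]
  linarith

theorem exists_forall_le_twoPoint (hu : IsClassicalSolution V u ut)
    (h : IsLogConcaveGroundState V φ) {T : ℝ} (hT : 0 < T) :
    ∃ M, ∀ t ∈ Icc 0 T, ∀ p, M ≤ twoPoint u φ t p := by
  obtain ⟨M, hM⟩ := hu.bounded T hT
  obtain ⟨a, ha⟩ := h.exists_isMax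
  have hM0 : 0 ≤ M := (abs_nonneg _).trans (hM 0 ⟨le_rfl, hT.le⟩ 0)
  refine ⟨-(M * (φ a + φ a)), fun t ht p => neg_le_of_abs_le ?_⟩
  refine (abs_twoPoint_le (fun x => (h.pos x).le) (hM t ht) p).trans ?_
  gcongr <;> exact ha _

theorem isSupersolution_exp_mul_barrier_add_twoPoint (hu : IsClassicalSolution V u ut)
    (hφ : ∀ x, HasSecondDerivAt φ (-V x * φ x) x) {D : Set (ℝ × ℝ)} {K c B : ℝ}
    (hbarrier : IsSupersolution D (fun p => V p.1 + V p.2 + c) fun _ => barrier K φ)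
    (hB : 0 ≤ B) :
    IsSupersolution D (fun p => V p.1 + V p.2)
      fun t p => B * (Real.exp (-c * t) * barrier K φ p) + twoPoint u φ t p := by
  have hexp := (hbarrier.exp_mul c).const_mul hB
  simp only [add_sub_cancel_right] at hexp
  exact hexp.add (hu.isSupersolution_twoPoint hφ D)

theorem neg_twoPoint_le_barrier (hu : IsClassicalSolution V u ut)
    (h : IsLogConcaveGroundState V φ) {K c B : ℝ} (hK : 0 ≤ K)
    (hbarrier : IsSupersolution {p | p.2 ≤ p.1} (fun p => V p.1 + V p.2 + c)
      fun _ => barrier K φ)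
    (hB : ∀ x, |u 0 x| ≤ B) {t : ℝ} (ht : 0 ≤ t) {p : ℝ × ℝ} (hp : p.2 ≤ p.1) :
    -twoPoint u φ t p ≤ B * (Real.exp (-c * t) * barrier K φ p) := by
  have hB0 : 0 ≤ B := (abs_nonneg _).trans (hB 0)
  have hpos (x : ℝ) : 0 ≤ φ x := (h.pos x).le
  have hnonneg {s : ℝ} {p : ℝ × ℝ} (hp : p.2 ≤ p.1) :
      0 ≤ B * (Real.exp (-c * s) * barrier K φ p) :=
    mul_nonneg hB0 (mul_nonneg (Real.exp_pos _).le
      ((add_nonneg (hpos _) (hpos _)).trans (h.add_le_barrier hK hp)))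
  suffices 0 ≤ B * (Real.exp (-c * t) * barrier K φ p) + twoPoint u φ t p by linarith
  refine (hu.isSupersolution_exp_mul_barrier_add_twoPoint h.hasSecondDerivAt hbarrier hB0).nonneg
    (T := t) (isClosed_le continuous_snd continuous_fst) ?_ ?_ ?_ (fun p hp => ?_)
    (fun s _ p hp => ?_) ⟨ht, le_rfl⟩ hp
  · have hφ := h.continuous
    refine ContinuousOn.add ?_ ((hu.continuousOn_twoPoint hφ).mono fun z hz => hz.1)
    simp only [barrier]
    fun_prop
  · obtain ⟨w, hw⟩ := h.exists_potential_le
    exact ⟨w + w, fun p _ => add_le_add (hw p.1) (hw p.2)⟩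
  · obtain ⟨M, hM⟩ := hu.exists_forall_le_twoPoint h (show 0 < t + 1 by positivity)
    exact ⟨M, fun s hs p hp => by linarith [hM s ⟨hs.1, by linarith [hs.2]⟩ p, hnonneg (s := s) hp]⟩
  · have htwo := abs_twoPoint_le hpos hB p
    have hlow := mul_le_mul_of_nonneg_left (h.add_le_barrier hK hp) hB0
    simp only [mul_zero, Real.exp_zero, one_mul]
    linarith [neg_abs_le (twoPoint u φ 0 p)]
  · have hdiag : p.2 = p.1 := frontier_le_subset_eq continuous_snd continuous_fst hp
    have hzero : twoPoint u φ s p = 0 := by simp only [twoPoint, hdiag, sub_self]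
    rw [hzero, add_zero]
    exact hnonneg hdiag.le

theorem abs_twoPoint_le_exp (hu : IsClassicalSolution V u ut)
    (h : IsLogConcaveGroundState V φ) {K c B : ℝ} (hK : 0 ≤ K)
    (hbarrier : IsSupersolution {p | p.2 ≤ p.1} (fun p => V p.1 + V p.2 + c)
      fun _ => barrier K φ)
    (hB : ∀ x, |u 0 x| ≤ B) {t : ℝ} (ht : 0 ≤ t) (x y : ℝ) :
    |twoPoint u φ t (x, y)| ≤ B * Real.exp (-c * t) * (K * (φ x * φ y) + φ x + φ y) := by
  have hB0 : 0 ≤ B := (abs_nonneg _).trans (hB 0)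
  wlog hyx : y ≤ x generalizing x y
  · have hswap := this y x (le_of_not_ge hyx)
    rw [show twoPoint u φ t (x, y) = -twoPoint u φ t (y, x) by simp only [twoPoint]; ring, abs_neg]
    linarith
  have hupper := hu.neg.neg_twoPoint_le_barrier h hK hbarrier (by simpa using hB) ht
    (p := (x, y)) hyx
  have hlower := hu.neg_twoPoint_le_barrier h hK hbarrier hB ht (p := (x, y)) hyx
  have hneg : twoPoint (fun t x => -u t x) φ t (x, y) = -twoPoint u φ t (x, y) := by
    simp only [twoPoint]; ring
  calc |twoPoint u φ t (x, y)| ≤ B * (Real.exp (-c * t) * barrier K φ (x, y)) :=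
        abs_le.2 ⟨by linarith, by linarith⟩
    _ ≤ B * (Real.exp (-c * t) * (K * (φ x * φ y) + φ x + φ y)) := by
        gcongr; exact h.barrier_le hK (x, y)
    _ = _ := by ring

end IsClassicalSolution

end ClassicalSolution

section Conservation

theorem tendsto_integral_mul_comp_mul_zero {f χ : ℝ → ℝ} {C : ℝ} (hf : Integrable f)
    (hχ : Continuous χ) (hC : ∀ y, |χ y| ≤ C) :
    Tendsto (fun ε => ∫ y, f y * χ (ε * y)) (𝓝 0) (𝓝 ((∫ y, f y) * χ 0)) := by
  rw [← integral_mul_const]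
  refine tendsto_integral_filter_of_dominated_convergence (fun y => |f y| * C)
    (.of_forall fun ε => ?_) (.of_forall fun ε => .of_forall fun y => ?_) (hf.abs.mul_const C)
    (.of_forall fun y => ?_)
  · exact hf.aestronglyMeasurable.mul (hχ.comp (by fun_prop)).aestronglyMeasurable
  · rw [norm_mul]
    exact mul_le_mul_of_nonneg_left (hC _) (norm_nonneg _)
  · have hcont : Continuous fun ε => χ (ε * y) := hχ.comp (by fun_prop)
    simpa using (hcont.tendsto 0).const_mul (f y)

theorem exists_cutoff : ∃ χ : ℝ → ℝ, ContDiff ℝ 2 χ ∧ HasCompactSupport χ ∧ χ 0 = 1 := by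
  let χ : ContDiffBump (0 : ℝ) := ⟨1, 2, one_pos, one_lt_two⟩
  exact ⟨χ, χ.contDiff, χ.hasCompactSupport,
    χ.one_of_mem_closedBall (Metric.mem_closedBall_self zero_le_one)⟩

namespace IsClassicalSolution

variable {V φ χ ψ : ℝ → ℝ} {u ut : ℝ → ℝ → ℝ} {t : ℝ}

theorem hasDerivAt_integral_mul (hu : IsClassicalSolution V u ut) (hψ : Continuous ψ)
    (hsupp : HasCompactSupport ψ) (ht : 0 < t) :
    HasDerivAt (fun s => ∫ y, u s y * ψ y) (∫ y, ut t y * ψ y) t := by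
  have hpos {s : ℝ} (hs : s ∈ Icc (t / 2) (2 * t)) : 0 < s := (half_pos ht).trans_le hs.1
  obtain ⟨C, hC⟩ := (isCompact_Icc.prod hsupp).exists_bound_of_continuousOn
    (hu.continuousOn_ut.mono fun p hp => hpos hp.1)
  have hint : Integrable ψ := hψ.integrable_of_hasCompactSupport hsupp
  refine (hasDerivAt_integral_of_dominated_loc_of_deriv_le (F' := fun s y => ut s y * ψ y)
    (bound := fun y => C * |ψ y|) (Icc_mem_nhds (by linarith : t / 2 < t) (by linarith : t < 2 * t))
    ?_ ?_ ?_ ?_ (hint.abs.const_mul C) ?_).2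
  · filter_upwards [lt_mem_nhds ht] with s hs
    exact ((hu.continuous_slice hs.le).mul hψ).aestronglyMeasurable
  · exact ((hu.continuous_slice ht.le).mul hψ).integrable_of_hasCompactSupport hsupp.mul_left
  · exact ((hu.continuous_ut_slice ht).mul hψ).aestronglyMeasurable
  · refine .of_forall fun y s hs => ?_
    by_cases hy : y ∈ tsupport ψ
    · rw [norm_mul, ← Real.norm_eq_abs]
      exact mul_le_mul_of_nonneg_right (hC (s, y) ⟨hs, hy⟩) (norm_nonneg _)
    · simp [image_eq_zero_of_notMem_tsupport hy]
  · exact .of_forall fun y s hs => (hu.hasDerivAt s (hpos hs) y).mul_const _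

theorem continuousOn_integral_mul (hu : IsClassicalSolution V u ut) (hψ : Integrable ψ) (T : ℝ) :
    ContinuousOn (fun s => ∫ y, u s y * ψ y) (Icc 0 T) := by
  rcases le_or_gt T 0 with hT | hT
  · exact (subsingleton_Icc_of_ge hT).continuousOn _
  obtain ⟨M, hM⟩ := hu.bounded T hT
  refine continuousOn_of_dominated (bound := fun y => M * |ψ y|) (fun s hs => ?_)
    (fun s hs => .of_forall fun y => ?_) (hψ.abs.const_mul M) (.of_forall fun y => ?_)
  · exact (hu.continuous_slice hs.1).aestronglyMeasurable.mul hψ.aestronglyMeasurable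
  · rw [norm_mul]
    exact mul_le_mul_of_nonneg_right (hM s hs y) (norm_nonneg _)
  · exact (hu.continuousOn.comp (f := fun s => (s, y)) (by fun_prop) fun s hs => hs.1).mul
      continuousOn_const

theorem integral_ut_mul (hu : IsClassicalSolution V u ut) (hV : Continuous V) {ψ'' : ℝ → ℝ}
    (hψ : ∀ x, HasSecondDerivAt ψ (ψ'' x) x) (hψ'' : Continuous ψ'')
    (hsupp : HasCompactSupport ψ) (ht : 0 < t) :
    ∫ y, ut t y * ψ y = ∫ y, u t y * (ψ'' y + V y * ψ y) := by
  have hψ0 := continuous_of_hasSecondDerivAt hψ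
  have hu0 := hu.continuous_slice ht.le
  have hut := hu.continuous_ut_slice ht
  have hgreen := integral_mul_eq_of_hasSecondDerivAt (hu.hasSecondDerivAt t ht) hψ
    (hut.sub (hV.mul hu0)) hψ'' hsupp
  have hsupp'' := hasCompactSupport_of_hasSecondDerivAt hψ hsupp
  have hVint : Integrable fun y => V y * u t y * ψ y :=
    ((hV.mul hu0).mul hψ0).integrable_of_hasCompactSupport hsupp.mul_left
  calc ∫ y, ut t y * ψ y
      = ∫ y, ((ut t y - V y * u t y) * ψ y + V y * u t y * ψ y) := by congr 1; funext y; ring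
    _ = (∫ y, u t y * ψ'' y) + ∫ y, V y * u t y * ψ y := by
      rw [← hgreen]
      exact integral_add (((hut.sub (hV.mul hu0)).mul hψ0).integrable_of_hasCompactSupport
        hsupp.mul_left) hVint
    _ = ∫ y, (u t y * ψ'' y + V y * u t y * ψ y) :=
      (integral_add ((hu0.mul hψ'').integrable_of_hasCompactSupport hsupp''.mul_left) hVint).symm
    _ = ∫ y, u t y * (ψ'' y + V y * ψ y) := by congr 1; funext y; ring

theorem hasDerivAt_integral_mul_cutoff (hu : IsClassicalSolution V u ut) (hV : Continuous V)
    (hφ : ∀ x, HasSecondDerivAt φ (-V x * φ x) x) (hχ : ContDiff ℝ 2 χ)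
    (hsupp : HasCompactSupport χ) {ε : ℝ} (hε : ε ≠ 0) (ht : 0 < t) :
    HasDerivAt (fun s => ∫ y, u s y * (φ y * χ (ε * y)))
      (∫ y, u t y * (2 * ε * (deriv φ y * deriv χ (ε * y))
        + ε ^ 2 * (φ y * deriv (deriv χ) (ε * y)))) t := by
  have hφ0 := continuous_of_hasSecondDerivAt hφ
  have hφ1 := continuous_deriv_of_hasSecondDerivAt hφ
  have hχ' := contDiff_one_deriv hχ
  have hχ0 := hχ.continuous
  have hχ1 := hχ'.continuous
  have := hχ'.continuous_deriv le_rfl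
  have hmul (y : ℝ) : HasSecondDerivAt (fun y => φ y * χ (ε * y))
      (-V y * φ y * χ (ε * y) + 2 * (deriv φ y * (ε * deriv χ (ε * y)))
        + φ y * (ε ^ 2 * deriv (deriv χ) (ε * y))) y := by
    simpa only [deriv_comp_mul_left, smul_eq_mul] using
      (hφ y).mul (hasSecondDerivAt_of_contDiff hχ (ε * y)).comp_mul_left
  have hsupp' : HasCompactSupport fun y => φ y * χ (ε * y) :=
    (hsupp.comp_homeomorph (Homeomorph.mulLeft₀ ε hε)).mul_left
  refine (hu.hasDerivAt_integral_mul (by fun_prop) hsupp' ht).congr_deriv ?_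
  rw [hu.integral_ut_mul hV hmul (by fun_prop) hsupp' ht]
  congr 1
  funext y
  ring

theorem abs_integral_mul_cutoff_sub_le (hu : IsClassicalSolution V u ut) (hV : Continuous V)
    (hφ : ∀ x, HasSecondDerivAt φ (-V x * φ x) x) (hint : Integrable φ)
    (hint' : Integrable (deriv φ)) (hχ : ContDiff ℝ 2 χ) (hsupp : HasCompactSupport χ)
    {C M : ℝ} (hC0 : ∀ y, |χ y| ≤ C) (hC1 : ∀ y, |deriv χ y| ≤ C)
    (hC2 : ∀ y, |deriv (deriv χ) y| ≤ C) (ht : 0 < t) (hM : ∀ s ∈ Icc 0 t, ∀ x, |u s x| ≤ M)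
    {ε : ℝ} (hε : 0 < ε) :
    |(∫ y, u t y * (φ y * χ (ε * y))) - ∫ y, u 0 y * (φ y * χ (ε * y))|
      ≤ (M * (2 * ε * ((∫ y, |deriv φ y|) * C) + ε ^ 2 * ((∫ y, |φ y|) * C))) * t := by
  have hM0 : 0 ≤ M := (abs_nonneg _).trans (hM 0 ⟨le_rfl, ht.le⟩ 0)
  have hcutoff : Integrable fun y => φ y * χ (ε * y) :=
    hint.mul_bdd (c := C) (hχ.continuous.comp (by fun_prop)).aestronglyMeasurable
      (.of_forall fun y => hC0 _)
  obtain ⟨s, hs, hslope⟩ := exists_hasDerivAt_eq_slope _ _ ht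
    (hu.continuousOn_integral_mul hcutoff t)
    fun s hs => hu.hasDerivAt_integral_mul_cutoff hV hφ hχ hsupp hε.ne' hs.1
  rw [sub_zero, eq_div_iff ht.ne'] at hslope
  rw [← hslope, abs_mul, abs_of_pos ht]
  refine mul_le_mul_of_nonneg_right ?_ ht.le
  have hdom' := hint'.abs.mul_const C
  have hdom := hint.abs.mul_const C
  rw [← integral_mul_const, ← integral_mul_const, ← integral_const_mul, ← integral_const_mul,
    ← integral_add (hdom'.const_mul _) (hdom.const_mul _), ← integral_const_mul, ← Real.norm_eq_abs]
  refine norm_integral_le_of_norm_le (((hdom'.const_mul _).add (hdom.const_mul _)).const_mul M)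
    (.of_forall fun y => ?_)
  rw [norm_mul]
  refine mul_le_mul (hM s ⟨hs.1.le, hs.2.le⟩ y) ((norm_add_le _ _).trans ?_) (norm_nonneg _) hM0
  rw [norm_mul (2 * ε), norm_mul (ε ^ 2), norm_mul (deriv φ y), norm_mul (φ y),
    Real.norm_of_nonneg (by positivity : 0 ≤ 2 * ε),
    Real.norm_of_nonneg (by positivity : 0 ≤ ε ^ 2)]
  simp only [Real.norm_eq_abs]
  gcongr
  exacts [hC1 _, hC2 _]

theorem integral_mul_eq (hu : IsClassicalSolution V u ut) (hV : Continuous V)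
    (hφ : ∀ x, HasSecondDerivAt φ (-V x * φ x) x) (hint : Integrable φ)
    (hint' : Integrable (deriv φ)) (ht : 0 ≤ t) : ∫ y, u t y * φ y = ∫ y, u 0 y * φ y := by
  rcases ht.eq_or_lt with rfl | ht
  · rfl
  obtain ⟨M, hM⟩ := hu.bounded t ht
  obtain ⟨χ, hχ, hsupp, hχ0⟩ := exists_cutoff
  have hχ' := contDiff_one_deriv hχ
  obtain ⟨C₀, hC₀⟩ := hχ.continuous.bounded_above_of_compact_support hsupp
  obtain ⟨C₁, hC₁⟩ := hχ'.continuous.bounded_above_of_compact_support hsupp.deriv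
  obtain ⟨C₂, hC₂⟩ := (hχ'.continuous_deriv le_rfl).bounded_above_of_compact_support
    hsupp.deriv.deriv
  set C := max C₀ (max C₁ C₂)
  have hlim (s : ℝ) (hs : s ∈ Icc 0 t) : Tendsto (fun ε => ∫ y, u s y * (φ y * χ (ε * y)))
      (𝓝[>] 0) (𝓝 (∫ y, u s y * φ y)) := by
    have hus : Integrable fun y => u s y * φ y :=
      hint.bdd_mul (c := M) (hu.continuous_slice hs.1).aestronglyMeasurable
        (.of_forall (hM s hs))
    have := tendsto_integral_mul_comp_mul_zero hus hχ.continuous hC₀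
    simp only [hχ0, mul_one, mul_assoc] at this
    exact this.mono_left nhdsWithin_le_nhds
  have hzero : Tendsto (fun ε => (M * (2 * ε * ((∫ y, |deriv φ y|) * C)
      + ε ^ 2 * ((∫ y, |φ y|) * C))) * t) (𝓝[>] 0) (𝓝 0) := by
    exact tendsto_nhdsWithin_of_tendsto_nhds (Continuous.tendsto' (by fun_prop) _ _ (by simp))
  have hdiff := ((hlim t ⟨ht.le, le_rfl⟩).sub (hlim 0 ⟨le_rfl, ht.le⟩)).abs
  refine sub_eq_zero.1 (abs_nonpos_iff.1 (le_of_tendsto_of_tendsto hdiff hzero ?_))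
  filter_upwards [self_mem_nhdsWithin] with ε hε
  exact hu.abs_integral_mul_cutoff_sub_le hV hφ hint hint' hχ hsupp
    (fun y => (hC₀ y).trans (le_max_left _ _))
    (fun y => (hC₁ y).trans ((le_max_left _ _).trans (le_max_right _ _)))
    (fun y => (hC₂ y).trans ((le_max_right _ _).trans (le_max_right _ _))) ht hM hε

end IsClassicalSolution

end Conservation

section Decay

theorem abs_sub_projection_le {α : Type*} [MeasurableSpace α] {μ : Measure α} {f φ g : α → ℝ}
    (hφ : ∀ y, 0 ≤ φ y) (hfφ : Integrable (fun y => f y * φ y) μ)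
    (hφ2 : Integrable (fun y => φ y ^ 2) μ) (hpos : 0 < ∫ y, φ y ^ 2 ∂μ)
    (hgφ : Integrable (fun y => g y * φ y) μ) {x : α}
    (hle : ∀ y, |f x * φ y - f y * φ x| ≤ g y) :
    |f x - (∫ y, f y * φ y ∂μ) / (∫ y, φ y ^ 2 ∂μ) * φ x|
      ≤ (∫ y, g y * φ y ∂μ) / ∫ y, φ y ^ 2 ∂μ := by
  have hintegral : ∫ y, (f x * φ y - f y * φ x) * φ y ∂μ
      = f x * (∫ y, φ y ^ 2 ∂μ) - (∫ y, f y * φ y ∂μ) * φ x := by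
    rw [← integral_const_mul, ← integral_mul_const,
      ← integral_sub (hφ2.const_mul _) (hfφ.mul_const _)]
    congr 1
    funext y
    ring
  have hdiv : f x - (∫ y, f y * φ y ∂μ) / (∫ y, φ y ^ 2 ∂μ) * φ x
      = (∫ y, (f x * φ y - f y * φ x) * φ y ∂μ) / ∫ y, φ y ^ 2 ∂μ := by
    rw [hintegral]
    field_simp
  rw [hdiv, abs_div, abs_of_pos hpos, ← Real.norm_eq_abs]
  refine div_le_div_of_nonneg_right (norm_integral_le_of_norm_le hgφ (.of_forall fun y => ?_))
    hpos.le
  rw [norm_mul, Real.norm_of_nonneg (hφ y)]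
  exact mul_le_mul_of_nonneg_right (hle y) (hφ y)

theorem IsClassicalSolution.abs_sub_projection_le_exp {V φ : ℝ → ℝ} {u ut : ℝ → ℝ → ℝ}
    (hu : IsClassicalSolution V u ut) (h : IsLogConcaveGroundState V φ) {K c b B : ℝ} (hK : 0 ≤ K)
    (hbarrier : IsSupersolution {p | p.2 ≤ p.1} (fun p => V p.1 + V p.2 + c)
      fun _ => barrier K φ)
    (hb : ∀ x, φ x ≤ b) (hB : ∀ x, |u 0 x| ≤ B) {t : ℝ} (ht : 0 ≤ t) (x : ℝ) :
    |u t x - (∫ y, u 0 y * φ y) / (∫ y, φ y ^ 2) * φ x|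
      ≤ (K * b + 1 + b * (∫ y, φ y) / ∫ y, φ y ^ 2) * Real.exp (-c * t) * B := by
  have hφ0 (x : ℝ) : 0 ≤ φ x := (h.pos x).le
  have hB0 : 0 ≤ B := (abs_nonneg _).trans (hB 0)
  have hN := h.integral_sq_pos
  set A := B * Real.exp (-c * t)
  have htwo (y : ℝ) : |u t x * φ y - u t y * φ x| ≤ A * ((K * b + 1) * φ y + b) := calc
    |u t x * φ y - u t y * φ x| ≤ A * (K * (φ x * φ y) + φ x + φ y) :=
      hu.abs_twoPoint_le_exp h hK hbarrier hB ht x y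
    _ ≤ A * (K * (b * φ y) + b + φ y) := by gcongr <;> first | exact hb x | exact hφ0 y
    _ = _ := by ring
  have hmajorant : (fun y => A * ((K * b + 1) * φ y + b) * φ y)
      = fun y => A * ((K * b + 1) * φ y ^ 2 + b * φ y) := by
    funext y; ring
  have hmajorant_int := (h.integrable_sq.const_mul (K * b + 1)).add (h.integrable.const_mul b)
  obtain ⟨M, hM⟩ := hu.bounded_slice ht
  have hproj := abs_sub_projection_le hφ0
    (h.integrable.bdd_mul (hu.continuous_slice ht).aestronglyMeasurable (.of_forall hM))
    h.integrable_sq hN (by rw [hmajorant]; exact hmajorant_int.const_mul A) htwo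
  rw [hu.integral_mul_eq h.continuous_potential h.hasSecondDerivAt h.integrable
    h.integrable_deriv ht, hmajorant, integral_const_mul,
    integral_add (h.integrable_sq.const_mul _) (h.integrable.const_mul _), integral_const_mul,
    integral_const_mul] at hproj
  refine hproj.trans_eq ?_
  simp only [A]
  field_simp

theorem stmt_1_general {V φ : ℝ → ℝ} (h : IsLogConcaveGroundState V φ) :
    ∃ c > 0, ∃ C > 0, ∀ u ut : ℝ → ℝ → ℝ, IsClassicalSolution V u ut → ∀ t : ℝ, 0 ≤ t → ∀ x,
      |u t x - (∫ y, u 0 y * φ y) / (∫ y, φ y ^ 2) * φ x|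
        ≤ C * Real.exp (-c * t) * ⨆ y, |u 0 y| := by
  obtain ⟨K, hK, c, hc, hbarrier⟩ := h.exists_isSupersolution_barrier
  obtain ⟨a, ha⟩ := h.exists_isMax
  have hconst : 0 < K * φ a + 1 + φ a * (∫ y, φ y) / ∫ y, φ y ^ 2 := by
    have := h.pos a
    have := h.integral_sq_pos
    have : 0 ≤ ∫ y, φ y := integral_nonneg fun x => (h.pos x).le
    positivity
  refine ⟨c, hc, _, hconst, fun u ut hu t ht x =>
    hu.abs_sub_projection_le_exp h hK hbarrier ha (fun x => ?_) ht x⟩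
  obtain ⟨M, hM⟩ := hu.bounded_slice le_rfl
  exact le_ciSup ⟨M, forall_mem_range.2 hM⟩ x

end Decay

section DoubleWell

/-- The potential `n / (n + 1) - s ^ 2 + s ^ (2 * n + 2) / (n + 1)` whose equal minima `±1` are
joined by the kink. -/
noncomputable def doubleWell (n : ℕ) (s : ℝ) : ℝ :=
  (n - (n + 1) * s ^ 2 + s ^ (2 * n + 2)) / (n + 1)

theorem hasDerivAt_doubleWell (n : ℕ) (s : ℝ) :
    HasDerivAt (doubleWell n) (2 * (s ^ (2 * n + 1) - s)) s := by
  refine ((((hasDerivAt_pow 2 s).const_mul ((n : ℝ) + 1)).const_sub (n : ℝ)).add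
    (hasDerivAt_pow (2 * n + 2) s)).div_const ((n : ℝ) + 1) |>.congr_deriv ?_
  have : (n : ℝ) + 1 ≠ 0 := by positivity
  rw [show 2 * n + 2 - 1 = 2 * n + 1 by lia, show 2 - 1 = 1 from rfl, pow_one]
  push_cast
  field_simp
  ring

theorem continuous_doubleWell (n : ℕ) : Continuous (doubleWell n) :=
  continuous_iff_continuousAt.2 fun s => (hasDerivAt_doubleWell n s).continuousAt

theorem doubleWell_eq_zero {s : ℝ} (n : ℕ) (hs : s ^ 2 = 1) : doubleWell n s = 0 := by
  rw [doubleWell, show 2 * n + 2 = 2 * (n + 1) by ring, pow_mul, hs]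
  simp

theorem doubleWell_pos {n : ℕ} (hn : 1 ≤ n) {s : ℝ} (hs : s ^ 2 < 1) : 0 < doubleWell n s := by
  have hbernoulli := one_add_mul_self_lt_rpow_one_add (s := s ^ 2 - 1) (p := (n + 1 : ℕ))
    (by linarith [sq_nonneg s]) (sub_neg.2 hs).ne (by exact_mod_cast Nat.lt_succ_of_le hn)
  rw [Real.rpow_natCast, add_sub_cancel, ← pow_mul] at hbernoulli
  rw [doubleWell, show 2 * n + 2 = 2 * (n + 1) by ring]
  push_cast at hbernoulli
  exact div_pos (by linarith) (by positivity)

theorem mul_pow_mul_one_sub_add_pow_le_one (n : ℕ) {r : ℝ} (h0 : 0 ≤ r) (h1 : r ≤ 1) :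
    (2 * n + 1) * (r ^ n * (1 - r)) + r ^ (2 * n + 1) ≤ 1 := by
  induction n with
  | zero => simp
  | succ n ih =>
    have hstep : 0 ≤ (1 - r) * (1 - r ^ (n + 1)) ^ 2 := by
      have := sub_nonneg.2 h1
      positivity
    have hscaled := mul_le_mul_of_nonneg_left ih h0
    have hrec : 1 - ((2 * (n + 1 : ℕ) + 1) * (r ^ (n + 1) * (1 - r)) + r ^ (2 * (n + 1) + 1))
        = r * (1 - ((2 * n + 1) * (r ^ n * (1 - r)) + r ^ (2 * n + 1)))
          + (1 - r) * (1 - r ^ (n + 1)) ^ 2 := by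
      push_cast
      ring
    linarith

theorem mul_doubleWell_le_sq (n : ℕ) {s : ℝ} (hs : s ^ 2 ≤ 1) :
    ((2 * n + 1) * s ^ (2 * n) - 1) * doubleWell n s ≤ (s ^ (2 * n + 1) - s) ^ 2 := by
  have hle := mul_pow_mul_one_sub_add_pow_le_one n (sq_nonneg s) hs
  simp only [← pow_mul] at hle
  have hclear : (s ^ (2 * n + 1) - s) ^ 2 - ((2 * n + 1) * s ^ (2 * n) - 1) * doubleWell n s
      = n / (n + 1)
        * (1 - ((2 * n + 1) * (s ^ (2 * n) * (1 - s ^ 2)) + s ^ (2 * (2 * n + 1)))) := by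
    rw [doubleWell]
    field_simp
    ring
  have := mul_nonneg (show (0 : ℝ) ≤ n / (n + 1) by positivity) (sub_nonneg.2 hle)
  linarith

end DoubleWell

section Kink

/-- Increasing heteroclinic solutions of the Allen–Cahn equation `m'' + m - m ^ (2 * n + 1) = 0`
from `-1` to `1`. -/
structure IsKink (n : ℕ) (m : ℝ → ℝ) : Prop where
  one_le : 1 ≤ n
  contDiff : ContDiff ℝ 2 m
  strictMono : StrictMono m
  eq : ∀ x, deriv (deriv m) x + m x - m x ^ (2 * n + 1) = 0
  tendsto_atTop : Tendsto m atTop (𝓝 1)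
  tendsto_atBot : Tendsto m atBot (𝓝 (-1))

namespace IsKink

variable {n : ℕ} {m : ℝ → ℝ}

theorem hasDerivAt (h : IsKink n m) (x : ℝ) : HasDerivAt m (deriv m x) x :=
  (hasSecondDerivAt_of_contDiff h.contDiff x).hasDerivAt

theorem hasDerivAt_deriv (h : IsKink n m) (x : ℝ) :
    HasDerivAt (deriv m) (m x ^ (2 * n + 1) - m x) x :=
  (hasSecondDerivAt_of_contDiff h.contDiff x).hasDerivAt_deriv.congr_deriv (by linarith [h.eq x])

theorem hasSecondDerivAt_deriv (h : IsKink n m) (x : ℝ) :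
    HasSecondDerivAt (deriv m) (-(1 - (2 * n + 1) * m x ^ (2 * n)) * deriv m x) x := by
  refine hasSecondDerivAt_of_hasDerivAt (.of_forall h.hasDerivAt_deriv)
    ((((h.hasDerivAt x).fun_pow (2 * n + 1)).sub (h.hasDerivAt x)).congr_deriv ?_)
  rw [Nat.add_sub_cancel]
  push_cast
  ring

theorem sq_lt_one (h : IsKink n m) (x : ℝ) : m x ^ 2 < 1 := by
  have hlt : m x < 1 :=
    (h.strictMono (lt_add_one x)).trans_le (h.strictMono.monotone.ge_of_tendsto h.tendsto_atTop _)
  have hgt : -1 < m x :=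
    (h.strictMono.monotone.le_of_tendsto h.tendsto_atBot _).trans_lt (h.strictMono (sub_one_lt x))
  rw [sq_lt_one_iff_abs_lt_one]
  exact abs_lt.2 ⟨hgt, hlt⟩

theorem deriv_nonneg (h : IsKink n m) (x : ℝ) : 0 ≤ deriv m x := h.strictMono.monotone.deriv_nonneg

theorem integrable_deriv (h : IsKink n m) : Integrable (deriv m) := by
  rw [← integrableOn_univ, ← Iic_union_Ioi (a := 0)]
  exact (integrableOn_Iic_deriv_of_nonneg h.hasDerivAt (fun x _ => h.deriv_nonneg x)
    h.tendsto_atBot).union (integrableOn_Ioi_deriv_of_nonneg' (fun x _ => h.hasDerivAt x)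
      (fun x _ => h.deriv_nonneg x) h.tendsto_atTop)

theorem tendsto_doubleWell (h : IsKink n m) :
    Tendsto (fun x => doubleWell n (m x)) (cocompact ℝ) (𝓝 0) := by
  have hcont := continuous_doubleWell n
  rw [cocompact_eq_atBot_atTop, tendsto_sup]
  constructor
  · rw [← doubleWell_eq_zero n (s := -1) (by norm_num)]
    exact (hcont.tendsto _).comp h.tendsto_atBot
  · rw [← doubleWell_eq_zero n (s := 1) (by norm_num)]
    exact (hcont.tendsto _).comp h.tendsto_atTop

theorem deriv_sq_eq_doubleWell (h : IsKink n m) (x : ℝ) : deriv m x ^ 2 = doubleWell n (m x) := by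
  set e : ℝ → ℝ := fun x => deriv m x ^ 2 - doubleWell n (m x)
  have he (x : ℝ) : HasDerivAt e 0 x :=
    (((h.hasDerivAt_deriv x).fun_pow 2).sub
      ((hasDerivAt_doubleWell n (m x)).comp x (h.hasDerivAt x))).congr_deriv (by ring)
  have hconst (y : ℝ) : e y = e x :=
    is_const_of_deriv_eq_zero (fun y => (he y).differentiableAt) (fun y => (he y).deriv) y x
  have hsq : Tendsto (fun y => deriv m y ^ 2) atTop (𝓝 (e x)) := by
    have := (h.tendsto_doubleWell.mono_left atTop_le_cocompact).const_add (e x)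
    rw [add_zero] at this
    exact this.congr fun y => by rw [← hconst y, sub_add_cancel]
  have hlim : Tendsto (deriv m) atTop (𝓝 √(e x)) :=
    hsq.sqrt.congr fun y => Real.sqrt_sq (h.deriv_nonneg y)
  have hnull : √(e x) = 0 := by
    refine IntegrableAtFilter.eq_zero_of_tendsto
      (h.integrable_deriv.integrableAtFilter _) (fun s hs => ?_) hlim
    obtain ⟨b, hb⟩ := mem_atTop_sets.1 hs
    rw [← top_le_iff, ← Real.volume_Ici (a := b)]
    exact measure_mono hb
  have hzero := tendsto_nhds_unique hsq (hlim.pow 2)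
  rw [hnull, zero_pow two_ne_zero] at hzero
  exact sub_eq_zero.1 hzero

theorem deriv_pos (h : IsKink n m) (x : ℝ) : 0 < deriv m x := by
  refine (h.deriv_nonneg x).lt_of_ne fun hzero => ?_
  have := doubleWell_pos h.one_le (h.sq_lt_one x)
  rw [← h.deriv_sq_eq_doubleWell, ← hzero] at this
  norm_num at this

theorem tendsto_deriv (h : IsKink n m) : Tendsto (deriv m) (cocompact ℝ) (𝓝 0) := by
  have := h.tendsto_doubleWell.sqrt
  rw [Real.sqrt_zero] at this
  exact this.congr fun x => by rw [← h.deriv_sq_eq_doubleWell, Real.sqrt_sq (h.deriv_nonneg x)]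

theorem antitone_logDeriv_deriv (h : IsKink n m) : Antitone (logDeriv (deriv m)) := by
  have hderiv (x : ℝ) :=
    (h.hasSecondDerivAt_deriv x).hasDerivAt_deriv.fun_div (h.hasDerivAt_deriv x) (h.deriv_pos x).ne'
  refine antitone_of_deriv_nonpos (fun x => (hderiv x).differentiableAt) fun x => ?_
  refine (hderiv x).deriv.trans_le (div_nonpos_of_nonpos_of_nonneg ?_ (sq_nonneg _))
  have hpoly := mul_doubleWell_le_sq n (h.sq_lt_one x).le
  rw [← h.deriv_sq_eq_doubleWell] at hpoly
  rw [(h.hasDerivAt_deriv x).deriv]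
  linarith

theorem tendsto_pow_two_mul (h : IsKink n m) (k : ℕ) :
    Tendsto (fun x => m x ^ (2 * k)) (cocompact ℝ) (𝓝 1) := by
  rw [cocompact_eq_atBot_atTop, tendsto_sup]
  constructor
  · simpa using h.tendsto_atBot.pow (2 * k)
  · simpa using h.tendsto_atTop.pow (2 * k)

theorem isLogConcaveGroundState (h : IsKink n m) :
    IsLogConcaveGroundState (fun x => 1 - (2 * n + 1) * m x ^ (2 * n)) (deriv m) where
  continuous_potential := by
    have := h.contDiff.continuous
    fun_prop
  eventually_potential_le := by
    have hlim := ((h.tendsto_pow_two_mul n).const_mul (2 * (n : ℝ) + 1)).const_sub 1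
    have hn : (1 : ℝ) ≤ n := by exact_mod_cast h.one_le
    exact ⟨1, one_pos, hlim.eventually_le_const (by linarith)⟩
  pos := h.deriv_pos
  hasSecondDerivAt := h.hasSecondDerivAt_deriv
  antitone_logDeriv := h.antitone_logDeriv_deriv
  integrable := h.integrable_deriv
  tendsto_zero := h.tendsto_deriv

end IsKink

end Kink

/-- `L^∞` exponential decay of the linearized Allen–Cahn semigroup away from the
projection onto the span of `m'`. -/
theorem stmt_1 (n : ℕ) (hn : 1 ≤ n) (m : ℝ → ℝ)
    (hm : ContDiff ℝ 2 m) (hmono : StrictMono m)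
    (heq : ∀ x : ℝ, deriv (deriv m) x + m x - m x ^ (2 * n + 1) = 0)
    (h0 : m 0 = 0)
    (htop : Tendsto m atTop (nhds 1))
    (hbot : Tendsto m atBot (nhds (-1))) :
    ∃ c > (0:ℝ), ∃ C > (0:ℝ),
      ∀ (v : ℝ → ℝ) (u ut ux uxx : ℝ → ℝ → ℝ),
        Continuous v → (∃ M : ℝ, ∀ x : ℝ, |v x| ≤ M) →
        ContinuousOn (fun p : ℝ × ℝ => u p.1 p.2) {p : ℝ × ℝ | 0 ≤ p.1} →
        (∀ T > (0:ℝ), ∃ M : ℝ, ∀ t ∈ Set.Icc (0:ℝ) T, ∀ x : ℝ, |u t x| ≤ M) →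
        (∀ x : ℝ, u 0 x = v x) →
        ContinuousOn (fun p : ℝ × ℝ => ut p.1 p.2) {p : ℝ × ℝ | 0 < p.1} →
        ContinuousOn (fun p : ℝ × ℝ => ux p.1 p.2) {p : ℝ × ℝ | 0 < p.1} →
        ContinuousOn (fun p : ℝ × ℝ => uxx p.1 p.2) {p : ℝ × ℝ | 0 < p.1} →
        (∀ t : ℝ, 0 < t → ∀ x : ℝ,
          HasDerivAt (fun s => u s x) (ut t x) t ∧
          HasDerivAt (fun y => u t y) (ux t x) x ∧
          HasDerivAt (fun y => ux t y) (uxx t x) x ∧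
          ut t x = uxx t x + (1 - (2 * (n:ℝ) + 1) * m x ^ (2 * n)) * u t x) →
        ∀ t : ℝ, 0 ≤ t → ∀ x : ℝ,
          |u t x - ((∫ y : ℝ, v y * deriv m y) / (∫ y : ℝ, (deriv m y) ^ 2)) * deriv m x|
            ≤ C * Real.exp (-c * t) * ⨆ y : ℝ, |v y| := by
  obtain ⟨c, hc, C, hC, hdecay⟩ :=
    stmt_1_general (IsKink.isLogConcaveGroundState ⟨hn, hm, hmono, heq, htop, hbot⟩)
  refine ⟨c, hc, C, hC, fun v u ut ux uxx _ _ hu hbdd hinit hut _ _ hpde => ?_⟩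
  obtain rfl : u 0 = v := funext hinit
  exact hdecay u ut (.of_hasDerivAt hu hbdd hut hpde)
end

section
/- Let n ≥ 1 be an integer and let m : ℝ → ℝ be the unique increasing solution of m'' + m − m^{2n+1} = 0 with m(0) = 0 and m(x) → ±1 as x → ±∞. There exist constants β, C > 0 such that: for every bounded measurable v : ℝ → ℝ with inf_{θ∈ℝ} sup_{x∈ℝ} |v(x) − m(x−θ)| < β, there exists a unique ℓ ∈ ℝ such that ∫_ℝ v(y)·m'(y − ℓ) dy = 0; moreover, whenever θ ∈ ℝ satisfies sup_{x∈ℝ} |v(x) − m(x−θ)| < β, one has |ℓ − θ| ≤ C·sup_{x∈ℝ} |v(x) − m(x−θ)|. -/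
open Filter MeasureTheory

/-!
If `v` is within `δ` of `m(· - θ)`, then `ℓ ↦ ∫ v · m'(· - ℓ)` is a perturbation of the shifted
self-correlation `g (ℓ - θ) = ∫ m(· - θ) · m'(· - ℓ)` of the front. Since `m` is increasing with
symmetric limits, `g` is increasing, vanishes at `0` and has slope at least some `c > 0` on some
interval `[-r, r]`. The perturbation has size at most `δ ‖m'‖₁`, so when this is below `c * r` there
is a zero near `θ`, and every zero lies at distance at most `δ ‖m'‖₁ / c` from `θ`; its Lipschitz
constant is at most `δ ‖m''‖₁`, so for `δ ‖m''‖₁ < c` the slope of `g` wins and the zero is unique.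
The equation enters only through `‖m''‖₁ < ∞`: it makes `m'` unimodal, so that `‖m''‖₁` is the
finite total variation of `m'`.
-/

section IntegrableDeriv

variable {f : ℝ → ℝ} {a : ℝ}

lemma integrableOn_Ioi_deriv_of_monotoneOn (hf : MonotoneOn f (Set.Ici a))
    (hbdd : BddAbove (f '' Set.Ici a)) : IntegrableOn (deriv f) (Set.Ioi a) := by
  obtain ⟨M, hM⟩ := hbdd
  have hmonoOn : ∀ b ≥ a, MonotoneOn f (Set.uIcc a b) := fun b hab =>
    hf.mono (Set.uIcc_of_le hab ▸ Set.Icc_subset_Ici_self)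
  have hderiv : ∀ x > a, 0 ≤ deriv f x := fun x hx => by
    rw [← derivWithin_of_mem_nhds (Ici_mem_nhds hx)]
    exact hf.derivWithin_nonneg
  refine integrableOn_Ioi_of_intervalIntegral_norm_bounded (M - f a) a
    (b := fun t : ℝ => max a t) (l := atTop)
    (fun t => (hmonoOn _ (le_max_left a t)).intervalIntegrable_deriv.1)
    (tendsto_atTop_mono (le_max_right a) tendsto_id) (Eventually.of_forall fun t => ?_)
  have hab : a ≤ max a t := le_max_left a t
  calc ∫ x in a..max a t, ‖deriv f x‖
      = ∫ x in a..max a t, deriv f x :=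
        intervalIntegral.integral_congr_Ioo_of_le hab fun x hx =>
          Real.norm_of_nonneg (hderiv x hx.1)
    _ ≤ f (max a t) - f a := by
        have hmem := (hmonoOn _ hab).intervalIntegral_deriv_mem_uIcc
        rw [Set.uIcc_of_le (sub_nonneg.2 (hf Set.self_mem_Ici hab hab))] at hmem
        exact hmem.2
    _ ≤ M - f a := sub_le_sub_right (hM ⟨_, hab, rfl⟩) _

lemma integrableOn_Ioi_deriv_of_antitoneOn (hf : AntitoneOn f (Set.Ici a))
    (hbdd : BddBelow (f '' Set.Ici a)) : IntegrableOn (deriv f) (Set.Ioi a) := by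
  obtain ⟨M, hM⟩ := hbdd
  have hneg := integrableOn_Ioi_deriv_of_monotoneOn hf.neg
    ⟨-M, Set.forall_mem_image.2 fun x hx => neg_le_neg (hM ⟨x, hx, rfl⟩)⟩
  simpa [deriv.neg'] using hneg.neg

lemma integrableOn_Iic_deriv_of_monotoneOn (hf : MonotoneOn f (Set.Iic a))
    (hbdd : BddBelow (f '' Set.Iic a)) : IntegrableOn (deriv f) (Set.Iic a) := by
  have hmaps : ∀ x ∈ Set.Ici (-a), -x ∈ Set.Iic a := fun x hx => neg_le.1 (Set.mem_Ici.1 hx)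
  obtain ⟨M, hM⟩ := hbdd
  have hreflect : IntegrableOn (deriv fun x => f (-x)) (Set.Ioi (-a)) :=
    integrableOn_Ioi_deriv_of_antitoneOn
      (fun x hx y hy hxy => hf (hmaps y hy) (hmaps x hx) (neg_le_neg hxy))
      ⟨M, Set.forall_mem_image.2 fun x hx => hM ⟨-x, hmaps x hx, rfl⟩⟩
  rw [integrableOn_Iic_iff_integrableOn_Iio]
  simpa [deriv_comp_neg] using hreflect.comp_neg.neg

lemma integrable_deriv_of_monotone (hf : Monotone f) {M : ℝ} (hM : ∀ x, |f x| ≤ M) :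
    Integrable (deriv f) := by
  have hIic := integrableOn_Iic_deriv_of_monotoneOn (hf.monotoneOn (Set.Iic 0))
    ⟨-M, Set.forall_mem_image.2 fun x _ => (abs_le.1 (hM x)).1⟩
  have hIoi := integrableOn_Ioi_deriv_of_monotoneOn (hf.monotoneOn (Set.Ici 0))
    ⟨M, Set.forall_mem_image.2 fun x _ => (abs_le.1 (hM x)).2⟩
  simpa using hIic.union hIoi

lemma integrable_deriv_of_unimodal (hmono : MonotoneOn f (Set.Iic a))
    (hanti : AntitoneOn f (Set.Ici a)) (hbdd : BddBelow (Set.range f)) :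
    Integrable (deriv f) := by
  have hIic := integrableOn_Iic_deriv_of_monotoneOn hmono (hbdd.mono (Set.image_subset_range _ _))
  have hIoi := integrableOn_Ioi_deriv_of_antitoneOn hanti (hbdd.mono (Set.image_subset_range _ _))
  simpa using hIic.union hIoi

end IntegrableDeriv

section TranslationModulus

variable {E : Type*} [NormedAddCommGroup E] [NormedSpace ℝ E] [CompleteSpace E] {f : ℝ → E}

lemma lintegral_enorm_translate_sub_le (hf : ContDiff ℝ 1 f) (a b : ℝ) :
    ∫⁻ y, ‖f (y - a) - f (y - b)‖ₑ ≤ ENNReal.ofReal |b - a| * ∫⁻ y, ‖deriv f y‖ₑ := by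
  have hcont : Continuous (deriv f) := hf.continuous_deriv le_rfl
  have hftc (y : ℝ) : ∫ t in a..b, deriv f (y - t) = f (y - a) - f (y - b) := by
    rw [intervalIntegral.integral_comp_sub_left (fun t => deriv f t) y,
      intervalIntegral.integral_deriv_eq_sub
        (fun x _ => hf.differentiable one_ne_zero x) (hcont.intervalIntegrable _ _)]
  calc ∫⁻ y, ‖f (y - a) - f (y - b)‖ₑ
      ≤ ∫⁻ y, ∫⁻ t in Set.uIoc a b, ‖deriv f (y - t)‖ₑ := lintegral_mono fun y => by
        rw [← hftc y,
          enorm_eq_iff_norm_eq.2 (intervalIntegral.norm_integral_eq_norm_integral_uIoc _)]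
        exact enorm_integral_le_lintegral_enorm _
    _ = ∫⁻ t in Set.uIoc a b, ∫⁻ y, ‖deriv f (y - t)‖ₑ :=
        lintegral_lintegral_swap <| Continuous.aemeasurable <| by fun_prop
    _ = ∫⁻ _ in Set.uIoc a b, ∫⁻ y, ‖deriv f y‖ₑ :=
        lintegral_congr fun t => lintegral_sub_right_eq_self (fun y => ‖deriv f y‖ₑ) t
    _ = ENNReal.ofReal |b - a| * ∫⁻ y, ‖deriv f y‖ₑ := by
        rw [setLIntegral_const, Real.volume_uIoc, mul_comm]

lemma integral_norm_translate_sub_le (hf : ContDiff ℝ 1 f) (hf' : Integrable (deriv f))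
    (a b : ℝ) : ∫ y, ‖f (y - a) - f (y - b)‖ ≤ |b - a| * ∫ y, ‖deriv f y‖ := by
  have hcont : Continuous f := hf.continuous
  rw [integral_norm_eq_lintegral_enorm (by fun_prop),
    integral_norm_eq_lintegral_enorm hf'.aestronglyMeasurable,
    ← ENNReal.toReal_ofReal (abs_nonneg (b - a)), ← ENNReal.toReal_mul]
  exact ENNReal.toReal_mono (ENNReal.mul_ne_top ENNReal.ofReal_ne_top hf'.2.ne)
    (lintegral_enorm_translate_sub_le hf a b)

end TranslationModulus

section PerturbedZero

variable {g G : ℝ → ℝ} {r c ε k θ : ℝ}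

lemma mul_min_abs_le_abs (hg : Monotone g) (hg0 : g 0 = 0) (hr : 0 ≤ r)
    (hslope : MonotoneOn (fun s => g s - c * s) (Set.Icc (-r) r)) (s : ℝ) :
    c * min |s| r ≤ |g s| := by
  have h0 : (0 : ℝ) ∈ Set.Icc (-r) r := ⟨neg_nonpos.2 hr, hr⟩
  rcases le_total 0 s with hs | hs
  · have hmin : 0 ≤ min s r := le_min hs hr
    have hgrowth := hslope h0 ⟨by linarith, min_le_right s r⟩ hmin
    have hle := hg (min_le_left s r)
    simp only [hg0, mul_zero, sub_zero] at hgrowth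
    rw [abs_of_nonneg hs]
    exact le_trans (by linarith) (le_abs_self _)
  · have hmin : 0 ≤ min (-s) r := le_min (neg_nonneg.2 hs) hr
    have hgrowth := hslope (a := -min (-s) r) ⟨neg_le_neg (min_le_right _ r), by linarith⟩ h0
      (neg_nonpos.2 hmin)
    have hle := hg (le_neg_of_le_neg (min_le_left (-s) r))
    simp only [hg0, mul_zero, sub_zero] at hgrowth
    rw [abs_of_nonpos hs]
    exact le_trans (by linarith) (neg_le_abs _)

lemma mul_abs_sub_le_abs_sub
    (hslope : MonotoneOn (fun s => g s - c * s) (Set.Icc (-r) r)) {s t : ℝ}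
    (hs : |s| ≤ r) (ht : |t| ≤ r) : c * |s - t| ≤ |g s - g t| := by
  wlog hst : t ≤ s generalizing s t
  · rw [abs_sub_comm s, abs_sub_comm (g s)]
    exact this ht hs (le_of_not_ge hst)
  have hgrowth := hslope (abs_le.1 ht) (abs_le.1 hs) hst
  rw [abs_of_nonneg (sub_nonneg.2 hst)]
  exact le_trans (by linarith) (le_abs_self _)

lemma abs_lt_and_mul_abs_le_of_abs_le (hg : Monotone g) (hg0 : g 0 = 0) (hr : 0 ≤ r)
    (hslope : MonotoneOn (fun s => g s - c * s) (Set.Icc (-r) r)) (hε : ε < c * r) {s : ℝ}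
    (hs : |g s| ≤ ε) : |s| < r ∧ c * |s| ≤ ε := by
  have hmin := (mul_min_abs_le_abs hg hg0 hr hslope s).trans hs
  rcases lt_or_ge |s| r with h | h
  · exact ⟨h, min_eq_left h.le ▸ hmin⟩
  · rw [min_eq_right h] at hmin
    linarith

lemma abs_sub_lt_and_mul_abs_sub_le_of_eq_zero (hg : Monotone g) (hg0 : g 0 = 0) (hr : 0 ≤ r)
    (hslope : MonotoneOn (fun s => g s - c * s) (Set.Icc (-r) r)) (hε : ε < c * r)
    (hclose : ∀ s, |G s - g (s - θ)| ≤ ε) {s : ℝ} (hs : G s = 0) :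
    |s - θ| < r ∧ c * |s - θ| ≤ ε :=
  abs_lt_and_mul_abs_le_of_abs_le hg hg0 hr hslope hε (by simpa [hs] using hclose s)

lemma exists_zero_of_close (hg0 : g 0 = 0) (hr : 0 ≤ r)
    (hslope : MonotoneOn (fun s => g s - c * s) (Set.Icc (-r) r)) (hε : ε < c * r)
    (hclose : ∀ s, |G s - g (s - θ)| ≤ ε) (hG : Continuous G) : ∃ s, G s = 0 := by
  have h0 : (0 : ℝ) ∈ Set.Icc (-r) r := ⟨neg_nonpos.2 hr, hr⟩
  have hright := hslope h0 (Set.right_mem_Icc.2 (neg_le_self hr)) hr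
  have hleft := hslope (Set.left_mem_Icc.2 (neg_le_self hr)) h0 (neg_nonpos.2 hr)
  have hGright := abs_le.1 (hclose (r + θ))
  have hGleft := abs_le.1 (hclose (-r + θ))
  simp only [hg0, add_sub_cancel_right] at hright hleft hGright hGleft
  exact mem_range_of_exists_le_of_exists_ge hG ⟨-r + θ, by linarith⟩ ⟨r + θ, by linarith⟩

lemma existsUnique_zero_of_close (hg : Monotone g) (hg0 : g 0 = 0) (hr : 0 ≤ r)
    (hslope : MonotoneOn (fun s => g s - c * s) (Set.Icc (-r) r)) (hε : ε < c * r) (hk : k < c)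
    (hclose : ∀ s, |G s - g (s - θ)| ≤ ε) (hG : Continuous G)
    (hlip : ∀ s t, |(G s - g (s - θ)) - (G t - g (t - θ))| ≤ k * |s - t|) : ∃! s, G s = 0 := by
  obtain ⟨ℓ, hℓ⟩ := exists_zero_of_close hg0 hr hslope hε hclose hG
  refine ⟨ℓ, hℓ, fun s hs => ?_⟩
  have hlocal {t : ℝ} (ht : G t = 0) : |t - θ| ≤ r :=
    (abs_sub_lt_and_mul_abs_sub_le_of_eq_zero hg hg0 hr hslope hε hclose ht).1.le
  have hle : c * |s - ℓ| ≤ k * |s - ℓ| := calc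
    c * |s - ℓ| = c * |(s - θ) - (ℓ - θ)| := by rw [sub_sub_sub_cancel_right]
    _ ≤ |g (s - θ) - g (ℓ - θ)| := mul_abs_sub_le_abs_sub hslope (hlocal hs) (hlocal hℓ)
    _ = |(G s - g (s - θ)) - (G ℓ - g (ℓ - θ))| := by
        rw [hs, hℓ, zero_sub, zero_sub, neg_sub_neg, abs_sub_comm]
    _ ≤ k * |s - ℓ| := hlip s ℓ
  by_contra hne
  exact hle.not_gt (mul_lt_mul_of_pos_right hk (abs_pos.2 (sub_ne_zero.2 hne)))

end PerturbedZero

/-- The cross-correlation `s ↦ ∫ v · w(· - s)` of two functions on the line. The Fermi coordinates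
of `v` are the zeros of its cross-correlation with `m'`. -/
noncomputable def crossCorrelation (v w : ℝ → ℝ) (s : ℝ) : ℝ := ∫ y, v y * w (y - s)

/-- The uniform distance from `v` to the translate `m(· - θ)`. It is the junk value `0` when
`v - m(· - θ)` is unbounded. -/
noncomputable def translateDist (v m : ℝ → ℝ) (θ : ℝ) : ℝ := ⨆ x, |v x - m (x - θ)|

section CrossCorrelation

variable {u v w : ℝ → ℝ} {M : ℝ}

lemma translateDist_nonneg (v m : ℝ → ℝ) (θ : ℝ) : 0 ≤ translateDist v m θ :=
  Real.iSup_nonneg fun _ => abs_nonneg _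

lemma abs_sub_translate_le_translateDist {L : ℝ} {m : ℝ → ℝ} (hv : ∀ x, |v x| ≤ M)
    (hm : ∀ x, |m x| ≤ L) (θ x : ℝ) : |v x - m (x - θ)| ≤ translateDist v m θ :=
  le_ciSup (f := fun x => |v x - m (x - θ)|)
    ⟨M + L, Set.forall_mem_range.2 fun y => (abs_sub _ _).trans (add_le_add (hv y) (hm _))⟩ x

lemma crossCorrelation_eq_integral_add (v w : ℝ → ℝ) (s : ℝ) :
    crossCorrelation v w s = ∫ y, v (y + s) * w y := by
  simpa [crossCorrelation] using (integral_add_right_eq_self (fun y => v y * w (y - s)) s).symm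

lemma crossCorrelation_comp_sub_right (v w : ℝ → ℝ) (θ s : ℝ) :
    crossCorrelation (fun y => v (y - θ)) w s = crossCorrelation v w (s - θ) := by
  simp only [crossCorrelation_eq_integral_add, add_sub_assoc]

lemma crossCorrelation_sub_left (hu : AEStronglyMeasurable u) (hv : AEStronglyMeasurable v)
    {K : ℝ} (hM : ∀ x, |u x| ≤ M) (hK : ∀ x, |v x| ≤ K) (hw : Integrable w) (s : ℝ) :
    crossCorrelation (fun y => u y - v y) w s =
      crossCorrelation u w s - crossCorrelation v w s := by
  simp only [crossCorrelation, sub_mul]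
  exact integral_sub ((hw.comp_sub_right s).bdd_mul hu (Eventually.of_forall hM))
    ((hw.comp_sub_right s).bdd_mul hv (Eventually.of_forall hK))

lemma abs_integral_mul_le (hM : ∀ x, |u x| ≤ M) (hw : Integrable w) :
    |∫ y, u y * w y| ≤ M * ∫ y, |w y| := by
  rw [← integral_const_mul, ← Real.norm_eq_abs]
  refine norm_integral_le_of_norm_le (hw.abs.const_mul M) (Eventually.of_forall fun y => ?_)
  rw [norm_mul]
  exact mul_le_mul_of_nonneg_right (hM y) (norm_nonneg _)

lemma abs_crossCorrelation_le (hM : ∀ x, |u x| ≤ M) (hw : Integrable w) (s : ℝ) :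
    |crossCorrelation u w s| ≤ M * ∫ y, |w y| := by
  rw [← integral_sub_right_eq_self (fun y => |w y|) s]
  exact abs_integral_mul_le hM (hw.comp_sub_right s)

lemma abs_crossCorrelation_sub_le (hu : AEStronglyMeasurable u) (hM : ∀ x, |u x| ≤ M)
    (hw : ContDiff ℝ 1 w) (hwi : Integrable w) (hw' : Integrable (deriv w)) (s t : ℝ) :
    |crossCorrelation u w s - crossCorrelation u w t| ≤ M * (∫ y, |deriv w y|) * |s - t| := by
  have hint (a : ℝ) : Integrable fun y => u y * w (y - a) :=
    (hwi.comp_sub_right a).bdd_mul hu (Eventually.of_forall hM)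
  calc |crossCorrelation u w s - crossCorrelation u w t|
      = |∫ y, u y * (w (y - s) - w (y - t))| := by
        simp only [crossCorrelation, mul_sub, integral_sub (hint s) (hint t)]
    _ ≤ M * ∫ y, |w (y - s) - w (y - t)| :=
        abs_integral_mul_le hM ((hwi.comp_sub_right s).sub (hwi.comp_sub_right t))
    _ ≤ M * (|t - s| * ∫ y, |deriv w y|) :=
        mul_le_mul_of_nonneg_left (integral_norm_translate_sub_le hw hw' s t)
          ((abs_nonneg _).trans (hM 0))
    _ = M * (∫ y, |deriv w y|) * |s - t| := by rw [abs_sub_comm]; ring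

lemma continuous_crossCorrelation (hu : AEStronglyMeasurable u) (hM : ∀ x, |u x| ≤ M)
    (hw : ContDiff ℝ 1 w) (hwi : Integrable w) (hw' : Integrable (deriv w)) :
    Continuous (crossCorrelation u w) :=
  (LipschitzWith.of_dist_le' fun s t =>
    abs_crossCorrelation_sub_le hu hM hw hwi hw' s t).continuous

lemma integrable_comp_add_mul (hu : Monotone u) (hM : ∀ x, |u x| ≤ M) (hw : Integrable w)
    (s : ℝ) : Integrable fun y => u (y + s) * w y :=
  hw.bdd_mul (hu.measurable.comp (measurable_add_const s)).aestronglyMeasurable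
    (Eventually.of_forall fun _ => hM _)

lemma monotone_crossCorrelation (hu : Monotone u) (hM : ∀ x, |u x| ≤ M) (hw : Integrable w)
    (hw0 : ∀ x, 0 ≤ w x) : Monotone (crossCorrelation u w) := fun s t hst => by
  simp only [crossCorrelation_eq_integral_add]
  exact integral_mono (integrable_comp_add_mul hu hM hw s) (integrable_comp_add_mul hu hM hw t)
    fun y => mul_le_mul_of_nonneg_right (hu (add_le_add_right hst y)) (hw0 y)

lemma monotoneOn_crossCorrelation_sub_mul {S T : Set ℝ} {κ : ℝ} (hu : Monotone u)
    (hM : ∀ x, |u x| ≤ M) (hw : Integrable w) (hw0 : ∀ x, 0 ≤ w x) (hS : MeasurableSet S)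
    (hslope : ∀ y ∈ S, MonotoneOn (fun s => u (y + s) - κ * s) T) :
    MonotoneOn (fun s => crossCorrelation u w s - κ * (∫ y in S, w y) * s) T := by
  intro s hs t ht hst
  have hint : Integrable fun y => (u (y + t) - u (y + s)) * w y := by
    simp only [sub_mul]
    exact (integrable_comp_add_mul hu hM hw t).sub (integrable_comp_add_mul hu hM hw s)
  have hgrowth := calc
    κ * (∫ y in S, w y) * (t - s) = ∫ y in S, κ * (t - s) * w y := by
        rw [integral_const_mul]; ring
    _ ≤ ∫ y in S, (u (y + t) - u (y + s)) * w y := by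
        refine setIntegral_mono_on (hw.const_mul _).integrableOn hint.integrableOn hS
          fun y hy => mul_le_mul_of_nonneg_right ?_ (hw0 y)
        have := hslope y hy hs ht hst
        simp only at this
        linarith
    _ ≤ ∫ y, (u (y + t) - u (y + s)) * w y :=
        setIntegral_le_integral hint <| Eventually.of_forall fun y =>
          mul_nonneg (sub_nonneg.2 (hu (add_le_add_right hst y))) (hw0 y)
    _ = crossCorrelation u w t - crossCorrelation u w s := by
        simp only [crossCorrelation_eq_integral_add, sub_mul]
        exact integral_sub (integrable_comp_add_mul hu hM hw t) (integrable_comp_add_mul hu hM hw s)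
  simp only
  linarith

end CrossCorrelation

section Front

variable {m : ℝ → ℝ} {L M : ℝ}

lemma abs_le_of_monotone_of_tendsto (hmono : Monotone m) (htop : Tendsto m atTop (nhds L))
    (hbot : Tendsto m atBot (nhds (-L))) (x : ℝ) : |m x| ≤ L :=
  abs_le.2 ⟨hmono.le_of_tendsto hbot x, hmono.ge_of_tendsto htop x⟩

lemma exists_deriv_pos_of_tendsto (hd : Differentiable ℝ m) (hmono : Monotone m) (hL : 0 < L)
    (htop : Tendsto m atTop (nhds L)) (hbot : Tendsto m atBot (nhds (-L))) :
    ∃ p, 0 < deriv m p := by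
  obtain ⟨a, ha⟩ := (hbot.eventually_lt_const (neg_lt_zero.2 hL)).exists
  obtain ⟨b, hb⟩ := (htop.eventually_const_lt hL).exists
  have hab : a < b := hmono.reflect_lt (ha.trans hb)
  obtain ⟨p, -, hp⟩ := exists_deriv_eq_slope m hab hd.continuous.continuousOn hd.differentiableOn
  exact ⟨p, hp ▸ div_pos (by linarith) (sub_pos.2 hab)⟩

lemma crossCorrelation_deriv_self_zero (hd : Differentiable ℝ m)
    (hint : Integrable fun y => m y * deriv m y)
    (htop : Tendsto m atTop (nhds L)) (hbot : Tendsto m atBot (nhds (-L))) :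
    crossCorrelation m (deriv m) 0 = 0 := by
  have hsq (x : ℝ) : HasDerivAt (fun x => m x ^ 2 / 2) (m x * deriv m x) x :=
    (((hd x).hasDerivAt.pow 2).div_const 2).congr_deriv (by simp; ring)
  simp only [crossCorrelation, sub_zero]
  rw [integral_of_hasDerivAt_of_tendsto hsq hint ((hbot.pow 2).div_const 2)
    ((htop.pow 2).div_const 2)]
  ring

lemma exists_monotoneOn_crossCorrelation_deriv_self (hm : ContDiff ℝ 1 m) (hmono : Monotone m)
    (hM : ∀ x, |m x| ≤ M) {p : ℝ} (hp : 0 < deriv m p) :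
    ∃ r > 0, ∃ c > 0,
      MonotoneOn (fun s => crossCorrelation m (deriv m) s - c * s) (Set.Icc (-r) r) := by
  have hd : Differentiable ℝ m := hm.differentiable one_ne_zero
  have hc : Continuous (deriv m) := hm.continuous_deriv le_rfl
  obtain ⟨κ, hκ, hκp⟩ := exists_between hp
  obtain ⟨ε, hε, hball⟩ := Metric.eventually_nhds_iff.1 (hc.continuousAt.eventually_const_lt hκp)
  obtain ⟨r, hr, hrε⟩ : ∃ r > 0, 2 * r < ε := ⟨ε / 3, by positivity, by linarith⟩
  have hderiv : ∀ x, |x - p| ≤ 2 * r → κ < deriv m x := fun x hx => hball (hx.trans_lt hrε)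
  have hmass : 0 < ∫ y in Set.Icc (p - r) (p + r), deriv m y := by
    rw [integral_Icc_eq_integral_Ioc, ← intervalIntegral.integral_of_le (by linarith)]
    refine intervalIntegral.intervalIntegral_pos_of_pos_on (hc.intervalIntegrable _ _)
      (fun x hx => hκ.trans (hderiv x ?_)) (by linarith)
    rw [abs_le]
    constructor <;> linarith [hx.1, hx.2]
  have hslope (y : ℝ) (hy : y ∈ Set.Icc (p - r) (p + r)) :
      MonotoneOn (fun s => m (y + s) - κ * s) (Set.Icc (-r) r) := by
    have hderivAt (s : ℝ) : HasDerivAt (fun s => m (y + s) - κ * s) (deriv m (y + s) - κ) s := by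
      simpa using ((hd (y + s)).hasDerivAt.comp_const_add y s).fun_sub
        ((hasDerivAt_id s).const_mul κ)
    refine monotoneOn_of_deriv_nonneg (convex_Icc _ _)
      (fun s _ => (hderivAt s).continuousAt.continuousWithinAt)
      (fun s _ => (hderivAt s).differentiableAt.differentiableWithinAt) fun s hs => ?_
    have hs := interior_subset hs
    rw [(hderivAt s).deriv, sub_nonneg]
    refine (hderiv _ (abs_le.2 ?_)).le
    constructor <;> linarith [hy.1, hy.2, hs.1, hs.2]
  exact ⟨r, hr, _, mul_pos hκ hmass, monotoneOn_crossCorrelation_sub_mul hmono hM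
    (integrable_deriv_of_monotone hmono hM) (fun _ => hmono.deriv_nonneg) measurableSet_Icc hslope⟩

end Front

section CloseToFront

variable {m v w : ℝ → ℝ} {L M : ℝ}

lemma crossCorrelation_sub_translate (hv : AEStronglyMeasurable v) (hvM : ∀ x, |v x| ≤ M)
    (hm : Continuous m) (hmL : ∀ x, |m x| ≤ L) (hw : Integrable w) (θ s : ℝ) :
    crossCorrelation (fun y => v y - m (y - θ)) w s =
      crossCorrelation v w s - crossCorrelation m w (s - θ) := by
  rw [← crossCorrelation_comp_sub_right]
  exact crossCorrelation_sub_left hv (by fun_prop) hvM (fun _ => hmL _) hw s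

lemma abs_crossCorrelation_sub_translate_le (hv : AEStronglyMeasurable v) (hvM : ∀ x, |v x| ≤ M)
    (hm : Continuous m) (hmL : ∀ x, |m x| ≤ L) (hw : Integrable w) (θ s : ℝ) :
    |crossCorrelation v w s - crossCorrelation m w (s - θ)| ≤
      translateDist v m θ * ∫ y, |w y| := by
  rw [← crossCorrelation_sub_translate hv hvM hm hmL hw]
  exact abs_crossCorrelation_le (abs_sub_translate_le_translateDist hvM hmL θ) hw s

lemma abs_crossCorrelation_sub_translate_sub_le (hv : AEStronglyMeasurable v)
    (hvM : ∀ x, |v x| ≤ M) (hm : Continuous m) (hmL : ∀ x, |m x| ≤ L) (hw : ContDiff ℝ 1 w)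
    (hwi : Integrable w) (hw' : Integrable (deriv w)) (θ s t : ℝ) :
    |(crossCorrelation v w s - crossCorrelation m w (s - θ)) -
        (crossCorrelation v w t - crossCorrelation m w (t - θ))| ≤
      translateDist v m θ * (∫ y, |deriv w y|) * |s - t| := by
  simp only [← crossCorrelation_sub_translate hv hvM hm hmL hwi]
  exact abs_crossCorrelation_sub_le (by fun_prop)
    (abs_sub_translate_le_translateDist hvM hmL θ) hw hwi hw' s t

end CloseToFront

lemma mul_lt_of_lt_div_add_one {δ a b : ℝ} (ha : 0 ≤ a) (hδ : 0 ≤ δ) (h : δ < b / (a + 1)) :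
    δ * a < b :=
  (mul_le_mul_of_nonneg_left (lt_add_one a).le hδ).trans_lt ((lt_div_iff₀ (by positivity)).1 h)

theorem stmt_3_general {m : ℝ → ℝ} {L : ℝ} (hL : 0 < L) (hm : ContDiff ℝ 2 m)
    (hmono : Monotone m) (hm'' : Integrable (deriv (deriv m)))
    (htop : Tendsto m atTop (nhds L)) (hbot : Tendsto m atBot (nhds (-L))) :
    ∃ β > 0, ∃ C > 0, ∀ v : ℝ → ℝ, AEStronglyMeasurable v → (∃ M, ∀ x, |v x| ≤ M) →
      (⨅ θ, translateDist v m θ) < β →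
      ∃ ℓ, crossCorrelation v (deriv m) ℓ = 0 ∧
        (∀ ℓ', crossCorrelation v (deriv m) ℓ' = 0 → ℓ' = ℓ) ∧
        (∀ θ, translateDist v m θ < β → |ℓ - θ| ≤ C * translateDist v m θ) := by
  have hm' : ContDiff ℝ 1 (deriv m) := ((contDiff_succ_iff_deriv (n := 1)).1 hm).2.2
  have hd : Differentiable ℝ m := hm.differentiable two_ne_zero
  have hbdd := abs_le_of_monotone_of_tendsto hmono htop hbot
  have hi : Integrable (deriv m) := integrable_deriv_of_monotone hmono hbdd
  have hg := monotone_crossCorrelation hmono hbdd hi fun _ => hmono.deriv_nonneg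
  have hg0 := crossCorrelation_deriv_self_zero hd
    (by simpa using integrable_comp_add_mul hmono hbdd hi 0) htop hbot
  obtain ⟨p, hp⟩ := exists_deriv_pos_of_tendsto hd hmono hL htop hbot
  obtain ⟨r, hr, c, hc, hslope⟩ :=
    exists_monotoneOn_crossCorrelation_deriv_self (hm.of_le one_le_two) hmono hbdd hp
  set A := ∫ y, |deriv m y|
  set K := ∫ y, |deriv (deriv m) y|
  have hA : 0 ≤ A := integral_nonneg fun _ => abs_nonneg _
  have hK : 0 ≤ K := integral_nonneg fun _ => abs_nonneg _
  refine ⟨min (c * r / (A + 1)) (c / (K + 1)), by positivity, (A + 1) / c, by positivity, ?_⟩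
  rintro v hv ⟨M, hM⟩ hinf
  obtain ⟨θ₀, hθ₀⟩ := exists_lt_of_ciInf_lt hinf
  have hclose := abs_crossCorrelation_sub_translate_le hv hM hd.continuous hbdd hi
  have hsmall {θ : ℝ} (hθ : translateDist v m θ < min (c * r / (A + 1)) (c / (K + 1))) :
      translateDist v m θ * A < c * r :=
    mul_lt_of_lt_div_add_one hA (translateDist_nonneg v m θ) (lt_min_iff.1 hθ).1
  obtain ⟨ℓ, hℓ, hunique⟩ := existsUnique_zero_of_close hg hg0 hr.le hslope (hsmall hθ₀)
    (mul_lt_of_lt_div_add_one hK (translateDist_nonneg v m θ₀) (lt_min_iff.1 hθ₀).2) (hclose θ₀)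
    (continuous_crossCorrelation hv hM hm' hi hm'')
    (abs_crossCorrelation_sub_translate_sub_le hv hM hd.continuous hbdd hm' hi hm'' θ₀)
  refine ⟨ℓ, hℓ, hunique, fun θ hθ => ?_⟩
  have hnear := (abs_sub_lt_and_mul_abs_sub_le_of_eq_zero hg hg0 hr.le hslope (hsmall hθ)
    (hclose θ) hℓ).2
  rw [div_mul_eq_mul_div, le_div_iff₀ hc]
  linarith [translateDist_nonneg v m θ]

lemma integrable_deriv_deriv_of_allenCahn {n : ℕ} {m : ℝ → ℝ} (hm : ContDiff ℝ 2 m)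
    (hmono : Monotone m) (hbdd : ∀ x, |m x| ≤ 1)
    (heq : ∀ x, deriv (deriv m) x + m x - m x ^ (2 * n + 1) = 0) (h0 : m 0 = 0) :
    Integrable (deriv (deriv m)) := by
  have hode (x : ℝ) : deriv (deriv m) x = -(m x * (1 - (m x ^ 2) ^ n)) := by
    rw [← pow_mul]
    linear_combination heq x
  have hfactor (x : ℝ) : 0 ≤ 1 - (m x ^ 2) ^ n :=
    sub_nonneg.2 (pow_le_one₀ (sq_nonneg _) ((sq_le_one_iff_abs_le_one _).2 (hbdd x)))
  have hd : Differentiable ℝ (deriv m) :=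
    ((contDiff_succ_iff_deriv (n := 1)).1 hm).2.2.differentiable one_ne_zero
  refine integrable_deriv_of_unimodal (a := 0) ?_ ?_
    ⟨0, Set.forall_mem_range.2 fun _ => hmono.deriv_nonneg⟩
  · refine monotoneOn_of_deriv_nonneg (convex_Iic 0) hd.continuous.continuousOn
      hd.differentiableOn fun x hx => ?_
    have hmx : m x ≤ m 0 := hmono (Set.mem_Iic.1 (interior_subset hx))
    rw [hode, Left.nonneg_neg_iff]
    exact mul_nonpos_of_nonpos_of_nonneg (hmx.trans_eq h0) (hfactor x)
  · refine antitoneOn_of_deriv_nonpos (convex_Ici 0) hd.continuous.continuousOn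
      hd.differentiableOn fun x hx => ?_
    have hmx : m 0 ≤ m x := hmono (Set.mem_Ici.1 (interior_subset hx))
    rw [hode, Left.neg_nonpos_iff]
    exact mul_nonneg (h0.symm.trans_le hmx) (hfactor x)

/-- Existence, uniqueness and Lipschitz-type stability of the Fermi coordinate (linear
center) `ℓ(v)` for `v` close to the manifold of traveling waves. -/
theorem stmt_3 (n : ℕ) (hn : 1 ≤ n) (m : ℝ → ℝ)
    (hm : ContDiff ℝ 2 m) (hmono : StrictMono m)
    (heq : ∀ x : ℝ, deriv (deriv m) x + m x - m x ^ (2 * n + 1) = 0)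
    (h0 : m 0 = 0)
    (htop : Tendsto m atTop (nhds 1))
    (hbot : Tendsto m atBot (nhds (-1))) :
    ∃ β > (0:ℝ), ∃ C > (0:ℝ),
      ∀ v : ℝ → ℝ, Measurable v → (∃ M : ℝ, ∀ x : ℝ, |v x| ≤ M) →
        (⨅ θ : ℝ, ⨆ x : ℝ, |v x - m (x - θ)|) < β →
        ∃ ℓ : ℝ, (∫ y : ℝ, v y * deriv m (y - ℓ)) = 0 ∧
          (∀ ℓ' : ℝ, (∫ y : ℝ, v y * deriv m (y - ℓ')) = 0 → ℓ' = ℓ) ∧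
          (∀ θ : ℝ, (⨆ x : ℝ, |v x - m (x - θ)|) < β →
            |ℓ - θ| ≤ C * ⨆ x : ℝ, |v x - m (x - θ)|) := by
  have hm'' := integrable_deriv_deriv_of_allenCahn hm hmono.monotone
    (abs_le_of_monotone_of_tendsto hmono.monotone htop hbot) heq h0
  obtain ⟨β, hβ, C, hC, h⟩ := stmt_3_general one_pos hm hmono.monotone hm'' htop hbot
  exact ⟨β, hβ, C, hC, fun v hv => h v hv.aestronglyMeasurable⟩
end
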